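/- Let G be a 2-connected subgraph of the n-dimensional grid graph Z^n, and let a, b be distinct vertices of G with every vertex z ∉ {a, b} of degree at least d in G. Then G contains an a–b path of length at least 2^d - 2. -/

import Mathlib

/-- The grid graph on `ℤ^n`: two vertices are adjacent iff they differ by exactly 1
in exactly one coordinate and agree elsewhere. -/
def gridGraph (n : ℕ) : SimpleGraph (Fin n → ℤ) :=
  SimpleGraph.fromRel (fun x y => ∃ i, |x i - y i| = 1 ∧ ∀ j, j ≠ i → x j = y j)

def TwoConnected {V : Type*} (H : SimpleGraph V) : Prop :=
  (∃ x y z : V, x ≠ y ∧ x ≠ z ∧ y ≠ z) ∧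
  ∀ v : V, ((⊤ : H.Subgraph).deleteVerts {v}).coe.Connected

/-!
The only features of the grid that matter for finite `G` are that it is bipartite and that any two
vertices are separated by a cut whose edges form a matching, namely a half-space.

Induct on `d`, and for fixed `d` on the size of the vertex set. In a minimal counterexample `S`
every set of inner vertices has at least three neighbours outside, since otherwise a long path
inside it extends by Menger's theorem. A matching cut separating `a` from `b` then splits `S` into
connected sides `A ∋ a` and `B ∋ b`. A leaf block of a side, attached at a vertex `c`, loses at most
one neighbour at each of its vertices, so by induction on `d` it contains long paths from `c` to all
of its vertices. Two such paths in different leaf blocks, joined up to an `a`–`b` path with at least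
two further edges, have total length at least `2 (2 ^ d - 2) + 2 = 2 ^ (d + 1) - 2`. Exchanging
pieces between `A` and `B` shows that this succeeds unless both sides are blocks. In that case an
edge `uv` from `A` to `B` joins a long `a`–`u` path to a long `v`–`b` path; this is one edge short,
and the missing edge comes from the bipartition through the sharper bound
`2 ^ d - par a - par b`.

If `G` is infinite, it has a vertex `x` far away from `a`, and an `a`–`b` path through `x` is long.
-/

namespace GridPath

open SimpleGraph

/-! ### Reachability and paths inside a set of vertices -/

section Paths

variable {V : Type*} {G : SimpleGraph V} {W W' : Set V} {x y z : V} {m n : ℕ}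

/-- `x` and `y` are joined by a walk of `G` all of whose vertices lie in `W`. Working with vertex
sets of one fixed graph avoids transporting walks between induced subgraphs. -/
def ReachableIn (G : SimpleGraph V) (W : Set V) (x y : V) : Prop :=
  ∃ p : G.Walk x y, ∀ v ∈ p.support, v ∈ W

/-- `x` and `y` are joined by a path of `G` of length exactly `n` inside `W`. -/
def HasPathIn (G : SimpleGraph V) (W : Set V) (x y : V) (n : ℕ) : Prop :=
  ∃ p : G.Walk x y, p.IsPath ∧ (∀ v ∈ p.support, v ∈ W) ∧ p.length = n

/-- `x` and `y` are joined by a path of `G` of length at least `n` inside `W`. -/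
def HasLongPathIn (G : SimpleGraph V) (W : Set V) (x y : V) (n : ℕ) : Prop :=
  ∃ m, n ≤ m ∧ HasPathIn G W x y m

/-- `W` induces a connected subgraph of `G`; the empty set is allowed. -/
def ConnectedOn (G : SimpleGraph V) (W : Set V) : Prop :=
  ∀ x ∈ W, ∀ y ∈ W, ReachableIn G W x y

namespace ReachableIn

theorem refl (hx : x ∈ W) : ReachableIn G W x x := ⟨Walk.nil, by simpa⟩

theorem symm (h : ReachableIn G W x y) : ReachableIn G W y x := by
  obtain ⟨p, hp⟩ := h
  exact ⟨p.reverse, by simpa using hp⟩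

theorem trans (hxy : ReachableIn G W x y) (hyz : ReachableIn G W y z) : ReachableIn G W x z := by
  obtain ⟨p, hp⟩ := hxy
  obtain ⟨q, hq⟩ := hyz
  refine ⟨p.append q, fun v hv => ?_⟩
  exact ((Walk.mem_support_append_iff p q).1 hv).elim (hp v) (hq v)

theorem mono (h : ReachableIn G W x y) (hW : W ⊆ W') : ReachableIn G W' x y :=
  h.imp fun _ hp v hv => hW (hp v hv)

theorem left (h : ReachableIn G W x y) : x ∈ W := h.elim fun p hp => hp _ p.start_mem_support

theorem right (h : ReachableIn G W x y) : y ∈ W := h.symm.left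

theorem of_adj (hxy : G.Adj x y) (hx : x ∈ W) (hy : y ∈ W) : ReachableIn G W x y :=
  ⟨Walk.cons hxy Walk.nil, by simp [hx, hy]⟩

theorem cons (hxy : G.Adj x y) (hx : x ∈ W) (hyz : ReachableIn G W y z) : ReachableIn G W x z :=
  (of_adj hxy hx hyz.left).trans hyz

theorem snoc (hxy : ReachableIn G W x y) (hyz : G.Adj y z) (hz : z ∈ W) : ReachableIn G W x z :=
  hxy.trans (of_adj hyz hxy.right hz)

theorem exists_adj_exit (h : ReachableIn G W x y) {X : Set V} (hx : x ∈ X) (hy : y ∉ X) :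
    ∃ u v, ReachableIn G (W ∩ X) x u ∧ v ∈ W ∧ v ∉ X ∧ G.Adj u v := by
  obtain ⟨p, hp⟩ := h
  induction p with
  | nil => exact absurd hx hy
  | @cons x w _ hxw p ih =>
    simp only [Walk.support_cons, List.mem_cons, forall_eq_or_imp] at hp
    by_cases hw : w ∈ X
    · obtain ⟨u, v, hwu, hv⟩ := ih hw hy hp.2
      exact ⟨u, v, hwu.cons hxw ⟨hp.1, hx⟩, hv⟩
    · exact ⟨x, w, refl ⟨hp.1, hx⟩, hp.2 _ p.start_mem_support, hw, hxw⟩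

theorem exists_adj_exit_mem (h : ReachableIn G W x y) {X : Set V} (hx : x ∈ X) (hy : y ∉ X) :
    ∃ u ∈ W ∩ X, ∃ v ∈ W \ X, G.Adj u v := by
  obtain ⟨u, v, hxu, hvW, hvX, huv⟩ := h.exists_adj_exit hx hy
  exact ⟨u, hxu.right, v, ⟨hvW, hvX⟩, huv⟩

theorem inter_of_closed (h : ReachableIn G W x y) {X : Set V} (hx : x ∈ X)
    (hX : ∀ u ∈ W ∩ X, ∀ v ∈ W, G.Adj u v → v ∈ X) : ReachableIn G (W ∩ X) x y := by
  by_contra hcon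
  obtain ⟨u, hu, v, hv, huv⟩ :=
    h.exists_adj_exit_mem (X := {v | ReachableIn G (W ∩ X) x v}) (refl ⟨h.left, hx⟩) hcon
  exact hv.2 (snoc hu.2 huv ⟨hv.1, hX u hu.2.right v hv.1 huv⟩)

theorem mem_of_closed (h : ReachableIn G W x y) {X : Set V} (hx : x ∈ X)
    (hX : ∀ u ∈ W ∩ X, ∀ v ∈ W, G.Adj u v → v ∈ X) : y ∈ X :=
  (h.inter_of_closed hx hX).right.2

theorem avoid_or_through (h : ReachableIn G W x y) (s : V) :
    ReachableIn G (W \ {s}) x y ∨ ReachableIn G W x s ∧ ReachableIn G W s y := by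
  classical
  obtain ⟨p, hp⟩ := h
  by_cases hs : s ∈ p.support
  · right
    exact ⟨⟨p.takeUntil s hs, fun v hv => hp v (p.support_takeUntil_subset_support hs hv)⟩,
      ⟨p.dropUntil s hs, fun v hv => hp v (p.support_dropUntil_subset_support hs hv)⟩⟩
  · left
    exact ⟨p, fun v hv => ⟨hp v hv, by rintro rfl; exact hs hv⟩⟩

theorem avoid_or_exists_adj (h : ReachableIn G W x y) {s : V} (hxs : x ≠ s) :
    ReachableIn G (W \ {s}) x y ∨ ∃ u, ReachableIn G (W \ {s}) x u ∧ G.Adj u s := by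
  refine or_iff_not_imp_left.2 fun hcon => ?_
  obtain ⟨u, hu, v, hv, huv⟩ :=
    h.exists_adj_exit_mem (X := {v | ReachableIn G (W \ {s}) x v}) (refl ⟨h.left, hxs⟩) hcon
  obtain rfl : v = s := by_contra fun hvs => hv.2 (snoc hu.2 huv ⟨hv.1, hvs⟩)
  exact ⟨u, hu.2, huv⟩

theorem exists_hasPathIn (h : ReachableIn G W x y) : ∃ n, HasPathIn G W x y n := by
  classical
  obtain ⟨p, hp⟩ := h
  exact ⟨_, p.bypass, p.bypass_isPath, fun v hv => hp v (p.support_bypass_subset_support hv), rfl⟩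

theorem exists_finite (h : ReachableIn G W x y) : ∃ F ⊆ W, F.Finite ∧ ReachableIn G F x y := by
  obtain ⟨p, hp⟩ := h
  exact ⟨{v | v ∈ p.support}, hp, List.finite_toSet _, p, fun _ hv => hv⟩

theorem connectedOn_setOf : ConnectedOn G {v | ReachableIn G W x v} := by
  have from_x (u) (hu : ReachableIn G W x u) : ReachableIn G {v | ReachableIn G W x v} x u :=
    (hu.inter_of_closed (X := {v | ReachableIn G W x v}) (refl hu.left)
      fun p hp q hq hpq => snoc hp.2 hpq hq).mono Set.inter_subset_right
  exact fun u hu v hv => (from_x u hu).symm.trans (from_x v hv)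

end ReachableIn

theorem ConnectedOn.mem_of_closed (hW : ConnectedOn G W) {X : Set V} (hx : x ∈ W) (hxX : x ∈ X)
    (hy : y ∈ W) (hX : ∀ u ∈ W ∩ X, ∀ v ∈ W, G.Adj u v → v ∈ X) : y ∈ X :=
  (hW x hx y hy).mem_of_closed hxX hX

theorem ConnectedOn.union_singleton (hW : ConnectedOn G W) (hy : y ∈ W) (hxy : G.Adj x y) :
    ConnectedOn G (W ∪ {x}) := by
  have to_y : ∀ u ∈ W ∪ {x}, ReachableIn G (W ∪ {x}) u y := by
    rintro u (hu | rfl)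
    · exact (hW u hu y hy).mono Set.subset_union_left
    · exact .of_adj hxy (Or.inr rfl) (Or.inl hy)
  exact fun u hu v hv => (to_y u hu).trans (to_y v hv).symm

namespace HasPathIn

theorem reachableIn (h : HasPathIn G W x y n) : ReachableIn G W x y := by
  obtain ⟨p, -, hp, -⟩ := h
  exact ⟨p, hp⟩

theorem mono (h : HasPathIn G W x y n) (hW : W ⊆ W') : HasPathIn G W' x y n := by
  obtain ⟨p, hpath, hp, hn⟩ := h
  exact ⟨p, hpath, fun v hv => hW (hp v hv), hn⟩

theorem symm (h : HasPathIn G W x y n) : HasPathIn G W y x n := by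
  obtain ⟨p, hpath, hp, hn⟩ := h
  exact ⟨p.reverse, hpath.reverse, by simpa using hp, by simpa using hn⟩

theorem pos (h : HasPathIn G W x y n) (hxy : x ≠ y) : 1 ≤ n := by
  obtain ⟨p, -, -, rfl⟩ := h
  exact Nat.one_le_iff_ne_zero.2 fun hp => hxy (Walk.eq_of_length_eq_zero hp)

theorem of_adj (hxy : G.Adj x y) (hx : x ∈ W) (hy : y ∈ W) : HasPathIn G W x y 1 :=
  ⟨Walk.cons hxy Walk.nil, by simp [hxy.ne], by simp [hx, hy], rfl⟩

theorem edge (hxy : G.Adj x y) : HasPathIn G {x, y} x y 1 := of_adj hxy (by simp) (by simp)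

theorem refl (hx : x ∈ W) : HasPathIn G W x x 0 := ⟨Walk.nil, by simp, by simpa, rfl⟩

theorem append (h : HasPathIn G W x y m) (h' : HasPathIn G W' y z n)
    (hd : W ∩ W' ⊆ {y}) : HasPathIn G (W ∪ W') x z (m + n) := by
  obtain ⟨p, hp, hpW, rfl⟩ := h
  obtain ⟨q, hq, hqW, rfl⟩ := h'
  refine ⟨p.append q, ?_, fun v hv => ?_, Walk.length_append p q⟩
  · rw [Walk.isPath_def] at hp hq ⊢
    rw [Walk.support_append]
    refine List.nodup_append.2 ⟨hp, hq.tail, ?_⟩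
    rintro u hu _ hv rfl
    obtain rfl := hd ⟨hpW u hu, hqW u (List.mem_of_mem_tail hv)⟩
    rw [← Walk.cons_tail_support] at hq
    exact (List.nodup_cons.1 hq).1 hv
  · exact ((Walk.mem_support_append_iff p q).1 hv).imp (hpW v) (hqW v)

theorem even_length_add (h : HasPathIn G W x y n) {par : V → ℕ}
    (hpar : ∀ u v, G.Adj u v → par u + par v = 1) : Even (n + par x + par y) := by
  obtain ⟨p, -, -, rfl⟩ := h
  induction p with
  | nil => simp
  | cons hadj p ih =>
    have := hpar _ _ hadj
    rw [Walk.length_cons]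
    grind

end HasPathIn

namespace HasLongPathIn

theorem symm (h : HasLongPathIn G W x y n) : HasLongPathIn G W y x n :=
  h.imp fun _ hm => ⟨hm.1, hm.2.symm⟩

end HasLongPathIn

/-! ### Two disjoint paths into a set -/

/-- The vertices from which `Y` can be reached inside `W` while avoiding `s`. -/
def reachingSet (G : SimpleGraph V) (W Y : Set V) (s : V) : Set V :=
  {v | ∃ y ∈ Y, ReachableIn G (W \ {s}) v y}

theorem reachingSet_subset {Y : Set V} {s : V} : reachingSet G W Y s ⊆ W \ {s} :=
  fun _ ⟨_, _, h⟩ => h.left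

section Separators

variable {Y : Set V} {s s' : V}

theorem reachingSet_subset_of_reachableIn (hs' : x ∉ reachingSet G W Y s')
    (hxs : ReachableIn G (W \ {s'}) x s) : reachingSet G W Y s' ⊆ reachingSet G W Y s := by
  rintro v ⟨y, hy, hvy⟩
  rcases hvy.avoid_or_through s with h | h
  · exact ⟨y, hy, h.mono fun z hz => ⟨hz.1.1, hz.2⟩⟩
  · exact absurd ⟨y, hy, hxs.trans h.2⟩ hs'

theorem reachingSet_subset_of_not_reachableIn (hx : ∃ y ∈ Y, ReachableIn G W x y)
    (hs : x ∉ reachingSet G W Y s) (hs' : x ∉ reachingSet G W Y s')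
    (hxs : ¬ ReachableIn G (W \ {s'}) x s) : reachingSet G W Y s ⊆ reachingSet G W Y s' := by
  rintro v ⟨y, hy, hvy⟩
  rcases hvy.avoid_or_through s' with h | ⟨hvs', hs'y⟩
  · exact ⟨y, hy, h.mono fun z hz => ⟨hz.1.1, hz.2⟩⟩
  refine absurd ⟨y, hy, ReachableIn.trans ?_ hs'y⟩ hs
  by_cases hxs' : x = s'
  · rw [hxs']
    exact .refl hvs'.right
  obtain ⟨y₀, hy₀, hr₀⟩ := hx
  rcases hr₀.avoid_or_exists_adj hxs' with h | ⟨u, hxu, hus'⟩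
  · exact absurd ⟨y₀, hy₀, h⟩ hs'
  rcases hxu.avoid_or_through s with h | h
  · exact (h.mono (W' := W \ {s}) fun z hz => ⟨hz.1.1, hz.2⟩).snoc hus' hvs'.right
  · exact absurd h.1 hxs

theorem exists_reachingSet_minimal (hW : W.Finite) (hx : ∃ y ∈ Y, ReachableIn G W x y) :
    ∃ s, x ∉ reachingSet G W Y s ∧
      ∀ s', x ∉ reachingSet G W Y s' → reachingSet G W Y s ⊆ reachingSet G W Y s' := by
  have hfin (s : V) : (reachingSet G W Y s).Finite :=
    hW.subset (reachingSet_subset.trans Set.sdiff_subset)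
  obtain ⟨s, hs, hmin⟩ := exists_minimalFor_of_wellFoundedLT (fun s => x ∉ reachingSet G W Y s)
    (fun s => (reachingSet G W Y s).ncard) ⟨x, fun h => (reachingSet_subset h).2 rfl⟩
  refine ⟨s, hs, fun s' hs' => ?_⟩
  by_cases hxs : ReachableIn G (W \ {s'}) x s
  · have hsub := reachingSet_subset_of_reachableIn hs' hxs
    have hle := hmin hs' (Set.ncard_le_ncard hsub (hfin s))
    exact (Set.eq_of_subset_of_ncard_le hsub hle (hfin s)).ge
  · exact reachingSet_subset_of_not_reachableIn hx hs hs' hxs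

/-- Stepping from `x₁` into the side of the separator of `x₂` and `Y` closest to `Y` keeps the
separation hypothesis true with `x₁` deleted, so the two paths can be built by induction. -/
theorem exists_adj_reachingSet_diff (hW : W.Finite) {x₁ x₂ : V} (hY : Y ⊆ W) (hx₁ : x₁ ∉ Y)
    (h : ∀ s, ∃ x, (x = x₁ ∨ x = x₂) ∧ ∃ y ∈ Y, ReachableIn G (W \ {s}) x y) :
    ∃ v ∈ W \ {x₁}, G.Adj x₁ v ∧ v ≠ x₂ ∧
      ∀ s, ∃ x, (x = v ∨ x = x₂) ∧ ∃ y ∈ Y, ReachableIn G ((W \ {x₁}) \ {s}) x y := by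
  have hx₂Y : ∃ y ∈ Y, ReachableIn G (W \ {x₁}) x₂ y := by
    obtain ⟨x, hx, y, hy, hr⟩ := h x₁
    obtain rfl : x = x₂ := hx.resolve_left hr.left.2
    exact ⟨y, hy, hr⟩
  obtain ⟨s, hs, hmin⟩ := exists_reachingSet_minimal (hW.subset Set.sdiff_subset) hx₂Y
  obtain ⟨x, hx, y, hy, hr⟩ := h s
  have hy_mem : y ∈ reachingSet G (W \ {x₁}) Y s :=
    ⟨y, hy, .refl ⟨⟨hY hy, by rintro rfl; exact hx₁ hy⟩, hr.right.2⟩⟩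
  have hx_notMem : x ∉ reachingSet G (W \ {x₁}) Y s := by
    rcases hx with rfl | rfl
    · exact fun hx => (reachingSet_subset hx).1.2 rfl
    · exact hs
  obtain ⟨u, hu, v, hv, huv⟩ :=
    hr.exists_adj_exit_mem (X := (reachingSet G (W \ {x₁}) Y s)ᶜ) hx_notMem (not_not.2 hy_mem)
  have hv_mem : v ∈ reachingSet G (W \ {x₁}) Y s := not_not.1 hv.2
  obtain rfl : u = x₁ := by
    by_contra hux
    obtain ⟨y', hy', hr'⟩ := hv_mem
    exact hu.2 ⟨y', hy', hr'.cons huv ⟨⟨hu.1.1, hux⟩, hu.1.2⟩⟩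
  refine ⟨v, (reachingSet_subset hv_mem).1, huv, by rintro rfl; exact hs hv_mem, fun s' => ?_⟩
  by_cases hs' : x₂ ∈ reachingSet G (W \ {u}) Y s'
  · exact ⟨x₂, Or.inr rfl, hs'⟩
  · exact ⟨v, Or.inl rfl, hmin s' hs' hv_mem⟩

theorem exists_disjoint_reachableIn_of_finite (hW : W.Finite) {x₁ x₂ : V} (hx₁ : x₁ ∈ W)
    (hx₂ : x₂ ∈ W) (hne : x₁ ≠ x₂) (hY : Y ⊆ W)
    (h : ∀ s, ∃ x, (x = x₁ ∨ x = x₂) ∧ ∃ y ∈ Y, ReachableIn G (W \ {s}) x y) :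
    ∃ M₁ ⊆ W, ∃ M₂ ⊆ W, Disjoint M₁ M₂ ∧
      (∃ y ∈ Y, ReachableIn G M₁ x₁ y) ∧ ∃ y ∈ Y, ReachableIn G M₂ x₂ y := by
  induction hn : W.ncard generalizing W x₁ with
  | zero => simp [(Set.ncard_eq_zero hW).1 hn] at hx₁
  | succ n ih =>
  by_cases h₁ : x₁ ∈ Y
  · obtain ⟨x, hx, hr⟩ := h x₁
    obtain rfl : x = x₂ := hx.resolve_left fun e => hr.elim fun _ hy => hy.2.left.2 e
    exact ⟨{x₁}, by simpa, W \ {x₁}, Set.sdiff_subset, Set.disjoint_sdiff_right,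
      ⟨x₁, h₁, .refl rfl⟩, hr⟩
  by_cases h₂ : x₂ ∈ Y
  · obtain ⟨x, hx, hr⟩ := h x₂
    obtain rfl : x = x₁ := hx.resolve_right fun e => hr.elim fun _ hy => hy.2.left.2 e
    exact ⟨W \ {x₂}, Set.sdiff_subset, {x₂}, by simpa, Set.disjoint_sdiff_left, hr,
      ⟨x₂, h₂, .refl rfl⟩⟩
  obtain ⟨v, hv, hx₁v, hvx₂, hsep⟩ := exists_adj_reachingSet_diff hW hY h₁ h
  obtain ⟨M₁, hM₁, M₂, hM₂, hdisj, ⟨y, hy, hr⟩, hr₂⟩ :=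
    ih (hW.subset Set.sdiff_subset) hv ⟨hx₂, hne.symm⟩ hvx₂
      (fun z hz => ⟨hY hz, by rintro rfl; exact h₁ hz⟩) hsep
      (by rw [Set.ncard_sdiff_singleton_of_mem hx₁, hn]; rfl)
  exact ⟨M₁ ∪ {x₁}, by grind, M₂, by grind, by grind,
    ⟨y, hy, (hr.mono Set.subset_union_left).cons hx₁v (Or.inr rfl)⟩, hr₂⟩

/-- Menger's theorem for two paths. -/
theorem exists_disjoint_reachableIn {x₁ x₂ : V} (hne : x₁ ≠ x₂)
    (h : ∀ s, ∃ x, (x = x₁ ∨ x = x₂) ∧ ∃ y ∈ Y, ReachableIn G (W \ {s}) x y) :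
    ∃ M₁ ⊆ W, ∃ M₂ ⊆ W, Disjoint M₁ M₂ ∧
      (∃ y ∈ Y, ReachableIn G M₁ x₁ y) ∧ ∃ y ∈ Y, ReachableIn G M₂ x₂ y := by
  have hfin (s : V) : ∃ F ⊆ W \ {s}, F.Finite ∧
      ∃ x, (x = x₁ ∨ x = x₂) ∧ ∃ y ∈ Y, ReachableIn G F x y := by
    obtain ⟨x, hx, y, hy, hr⟩ := h s
    obtain ⟨F, hFW, hF, hrF⟩ := hr.exists_finite
    exact ⟨F, hFW, hF, x, hx, y, hy, hrF⟩
  choose F hFW hF x hx y hy hr using hfin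
  have hx₂ : x₂ ∈ F x₁ :=
    (hx x₁).resolve_left (hFW x₁ (hr x₁).left).2 ▸ (hr x₁).left
  have hx₁ : x₁ ∈ F x₂ :=
    (hx x₂).resolve_right (hFW x₂ (hr x₂).left).2 ▸ (hr x₂).left
  -- A vertex outside `F x₁` does not meet the walk in `F x₁`, so finitely many walks suffice.
  set W' : Set V := F x₁ ∪ ⋃ s ∈ F x₁, F s
  have hFW' (s) (hs : s ∈ F x₁) : F s ⊆ W' := fun v hv => .inr (Set.mem_biUnion hs hv)
  have hW'W : W' ⊆ W := Set.union_subset (fun v hv => (hFW _ hv).1)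
    (Set.iUnion₂_subset fun s _ v hv => (hFW s hv).1)
  obtain ⟨M₁, hM₁, M₂, hM₂, hd, ⟨y₁, hy₁, h₁⟩, y₂, hy₂, h₂⟩ :=
    exists_disjoint_reachableIn_of_finite (G := G) (W := W') (Y := Y ∩ W')
      ((hF x₁).union ((hF x₁).biUnion fun s _ => hF s)) (hFW' x₂ hx₂ hx₁) (.inl hx₂) hne
      Set.inter_subset_right fun s => by
        by_cases hs : s ∈ F x₁
        · exact ⟨x s, hx s, y s, ⟨hy s, hFW' s hs (hr s).right⟩,
            (hr s).mono fun v hv => ⟨hFW' s hs hv, (hFW s hv).2⟩⟩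
        · exact ⟨x x₁, hx x₁, y x₁, ⟨hy x₁, .inl (hr x₁).right⟩,
            (hr x₁).mono fun v hv => ⟨.inl hv, fun e => hs (e ▸ hv)⟩⟩
  exact ⟨M₁, hM₁.trans hW'W, M₂, hM₂.trans hW'W, hd, ⟨y₁, hy₁.1, h₁⟩, y₂, hy₂.1, h₂⟩

end Separators

end Paths

/-! ### Linked sets and fragments -/

section Fragments

variable {V : Type*} {G : SimpleGraph V}

/-- `W` becomes 2-connected once the edge `xy` is added: no single vertex separates part of `W`
from both `x` and `y`. -/
structure Linked (G : SimpleGraph V) (W : Set V) (x y : V) : Prop where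
  left_mem : x ∈ W
  right_mem : y ∈ W
  ne : x ≠ y
  reachableIn : ∀ v, ∀ z ∈ W, z ≠ v → ReachableIn G (W \ {v}) z x ∨ ReachableIn G (W \ {v}) z y

/-- `Y` is a nonempty part of `H` that misses the root `b` and is joined to the rest of `H` only
through the vertex `c`. -/
structure IsFragment (G : SimpleGraph V) (H : Set V) (b : V) (Y : Set V) (c : V) : Prop where
  nonempty : Y.Nonempty
  subset : Y ⊆ H
  root_notMem : b ∉ Y
  attach_mem : c ∈ H
  attach_notMem : c ∉ Y
  mem_or_eq : ∀ u ∈ Y, ∀ v ∈ H, G.Adj u v → v ∈ Y ∨ v = c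

/-- An inclusion-minimal fragment: a leaf block of `H` without its cut vertex `c`. -/
def IsMinFragment (G : SimpleGraph V) (H : Set V) (b : V) (Y : Set V) (c : V) : Prop :=
  IsFragment G H b Y c ∧ ∀ Y' c', IsFragment G H b Y' c' → Y' ⊆ Y → Y' = Y

/-- A fragment that contains all minimal fragments. -/
def IsFullFragment (G : SimpleGraph V) (H : Set V) (b : V) (Y : Set V) (c : V) : Prop :=
  IsFragment G H b Y c ∧ ∀ Y' c', IsMinFragment G H b Y' c' → Y' ⊆ Y

/-- An inclusion-minimal full fragment. -/
def IsMinFullFragment (G : SimpleGraph V) (H : Set V) (b : V) (Y : Set V) (c : V) : Prop :=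
  IsFullFragment G H b Y c ∧ ∀ Y' c', IsFullFragment G H b Y' c' → Y' ⊆ Y → Y' = Y

variable {H Y Y₁ Y₂ : Set V} {b c c₁ c₂ : V}

theorem isFragment_setOf_reachableIn {s x : V} (hs : s ∈ H) (hx : x ∈ H) (hxs : x ≠ s)
    (hb : ¬ ReachableIn G (H \ {s}) x b) :
    IsFragment G H b {y | ReachableIn G (H \ {s}) x y} s where
  nonempty := ⟨x, .refl ⟨hx, hxs⟩⟩
  subset _ hy := hy.right.1
  root_notMem := hb
  attach_mem := hs
  attach_notMem h := h.right.2 rfl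
  mem_or_eq _ hu _ hv huv := or_iff_not_imp_right.2 fun hvs => .snoc hu huv ⟨hv, hvs⟩

namespace IsFragment

theorem reachableIn (h : IsFragment G H b Y c) {u v : V} (hu : u ∈ Y)
    (huv : ReachableIn G (H \ {c}) u v) : ReachableIn G Y u v :=
  (huv.inter_of_closed hu fun p hp q hq hpq =>
    (h.mem_or_eq p hp.2 q hq.1 hpq).resolve_right hq.2).mono Set.inter_subset_right

theorem sdiff (h : IsFragment G H b Y c) {W : Set V} (hY : Disjoint Y W) (hc : c ∉ W) :
    IsFragment G (H \ W) b Y c :=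
  ⟨h.nonempty, Set.subset_sdiff.2 ⟨h.subset, hY⟩, h.root_notMem, ⟨h.attach_mem, hc⟩,
    h.attach_notMem, fun u hu v hv huv => h.mem_or_eq u hu v hv.1 huv⟩

theorem exists_isMinFragment (h : IsFragment G H b Y c) (hH : H.Finite) :
    ∃ Y' c', Y' ⊆ Y ∧ IsMinFragment G H b Y' c' := by
  have hfin : {Z | ∃ c, IsFragment G H b Z c}.Finite :=
    hH.finite_subsets.subset fun Z ⟨_, hZ⟩ => hZ.subset
  obtain ⟨Y', hY'Y, ⟨c', hY'⟩, hmin⟩ := hfin.exists_le_minimal ⟨c, h⟩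
  exact ⟨Y', c', hY'Y, hY', fun Z d hZ hZY' => hZY'.antisymm (hmin ⟨d, hZ⟩ hZY')⟩

variable (hb : b ∈ H) (hH : ConnectedOn G H)
include hb hH

theorem exists_adj_attach (h : IsFragment G H b Y c) : ∃ u ∈ Y, G.Adj u c := by
  obtain ⟨y, hy⟩ := h.nonempty
  obtain ⟨u, hu, v, hv, huv⟩ :=
    (hH y (h.subset hy) b hb).exists_adj_exit_mem hy h.root_notMem
  obtain rfl := (h.mem_or_eq u hu.2 v hv.1 huv).resolve_left hv.2
  exact ⟨u, hu.2, huv⟩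

theorem attach_unique (h₁ : IsFragment G H b Y c₁) (h₂ : IsFragment G H b Y c₂) : c₁ = c₂ := by
  obtain ⟨u, hu, huc⟩ := h₁.exists_adj_attach hb hH
  exact (h₂.mem_or_eq u hu c₁ h₁.attach_mem huc).resolve_left h₁.attach_notMem

theorem reachableIn_attach_root (h : IsFragment G H b Y c) : ReachableIn G (H \ Y) c b := by
  obtain ⟨y, hy⟩ := h.nonempty
  obtain ⟨u, hu, v, hv, huv⟩ := (hH y (h.subset hy) b hb).exists_adj_exit_mem
    (X := {v | ReachableIn G (H \ Y) v b}ᶜ) (fun hr => hr.left.2 hy)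
    (fun hr => hr (.refl ⟨hb, h.root_notMem⟩))
  have hvb : ReachableIn G (H \ Y) v b := not_not.1 hv.2
  have huY : u ∈ Y := by_contra fun huY => hu.2 (hvb.cons huv ⟨hu.1, huY⟩)
  obtain rfl := (h.mem_or_eq u huY v hv.1 huv).resolve_left hvb.left.2
  exact hvb

theorem reachableIn_root (h : IsFragment G H b Y c) {x : V} (hx : x ∈ H \ Y) :
    ReachableIn G (H \ Y) x b := by
  by_contra hcon
  obtain ⟨u, hu, v, hv, huv⟩ := (hH x hx.1 b hb).exists_adj_exit_mem
    (X := {v | ReachableIn G (H \ Y) x v}) (.refl hx) hcon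
  have hvY : v ∈ Y := by_contra fun hvY => hv.2 (.snoc hu.2 huv ⟨hv.1, hvY⟩)
  obtain rfl := (h.mem_or_eq v hvY u hu.1 huv.symm).resolve_left hu.2.right.2
  exact hcon (hu.2.trans (h.reachableIn_attach_root hb hH))

theorem connectedOn_sdiff (h : IsFragment G H b Y c) : ConnectedOn G (H \ Y) :=
  fun _ hx _ hy => (h.reachableIn_root hb hH hx).trans (h.reachableIn_root hb hH hy).symm

theorem attach_notMem_of_attach_mem (h₁ : IsFragment G H b Y₁ c₁) (h₂ : IsFragment G H b Y₂ c₂)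
    (hc₁ : c₁ ∈ Y₂) : c₂ ∉ Y₁ := by
  intro hc₂
  obtain ⟨y, hy⟩ := h₁.nonempty
  have hb_mem : b ∈ Y₁ ∪ Y₂ := by
    refine hH.mem_of_closed (h₁.subset hy) (Or.inl hy) hb ?_
    rintro u ⟨-, hu | hu⟩ v hv huv
    · have := h₁.mem_or_eq u hu v hv huv
      grind
    · have := h₂.mem_or_eq u hu v hv huv
      grind
  exact hb_mem.elim h₁.root_notMem h₂.root_notMem

theorem inter (h₁ : IsFragment G H b Y₁ c₁) (h₂ : IsFragment G H b Y₂ c₂)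
    (hne : (Y₁ ∩ Y₂).Nonempty) : ∃ c, IsFragment G H b (Y₁ ∩ Y₂) c := by
  by_cases hc₁ : c₁ ∈ Y₂
  · have hc₂ := h₁.attach_notMem_of_attach_mem hb hH h₂ hc₁
    refine ⟨c₁, hne, fun y hy => h₁.subset hy.1, fun h => h₁.root_notMem h.1, h₁.attach_mem,
      fun h => h₁.attach_notMem h.1, fun u hu v hv huv => ?_⟩
    have := h₁.mem_or_eq u hu.1 v hv huv
    have := h₂.mem_or_eq u hu.2 v hv huv
    grind
  · refine ⟨c₂, hne, fun y hy => h₁.subset hy.1, fun h => h₁.root_notMem h.1, h₂.attach_mem,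
      fun h => h₂.attach_notMem h.2, fun u hu v hv huv => ?_⟩
    have := h₁.mem_or_eq u hu.1 v hv huv
    have := h₂.mem_or_eq u hu.2 v hv huv
    grind

theorem attach_notMem_of_disjoint (h₁ : IsFragment G H b Y₁ c₁) (h₂ : IsFragment G H b Y₂ c₂)
    (hdisj : Disjoint Y₁ Y₂) : c₁ ∉ Y₂ := by
  intro hc₁
  obtain ⟨u, hu, huc⟩ := h₁.exists_adj_attach hb hH
  obtain rfl := (h₂.mem_or_eq c₁ hc₁ u (h₁.subset hu) huc.symm).resolve_left
    (Set.disjoint_left.1 hdisj hu)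
  exact h₁.attach_notMem_of_attach_mem hb hH h₂ hc₁ hu

theorem reachableIn_root_of_disjoint (h₁ : IsFragment G H b Y₁ c₁)
    (h₂ : IsFragment G H b Y₂ c₂) (hdisj : Disjoint Y₁ Y₂) {x : V} (hx : x ∈ (H \ Y₁) \ Y₂) :
    ReachableIn G ((H \ Y₁) \ Y₂) x b := by
  have hfrag := h₂.sdiff hdisj.symm (h₂.attach_notMem_of_disjoint hb hH h₁ hdisj.symm)
  have hbY : b ∈ H \ Y₁ := ⟨hb, h₁.root_notMem⟩
  exact hfrag.reachableIn_root hbY (h₁.connectedOn_sdiff hb hH) hx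

end IsFragment

theorem IsFullFragment.exists_isMinFullFragment (h : IsFullFragment G H b Y c) (hH : H.Finite) :
    ∃ Y' c', IsMinFullFragment G H b Y' c' := by
  have hfin : {Z | ∃ c, IsFullFragment G H b Z c}.Finite :=
    hH.finite_subsets.subset fun Z ⟨_, hZ⟩ => hZ.1.subset
  obtain ⟨Y', -, ⟨c', hY'⟩, hmin⟩ := hfin.exists_le_minimal ⟨c, h⟩
  exact ⟨Y', c', hY', fun Z d hZ hZY' => hZY'.antisymm (hmin ⟨d, hZ⟩ hZY')⟩

namespace IsMinFragment

theorem subset (h₁ : IsMinFragment G H b Y₁ c₁) (h₂ : IsFragment G H b Y₂ c₂) (hb : b ∈ H)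
    (hH : ConnectedOn G H) (hne : (Y₁ ∩ Y₂).Nonempty) : Y₁ ⊆ Y₂ := by
  obtain ⟨c, hc⟩ := h₁.1.inter hb hH h₂ hne
  exact Set.inter_eq_left.1 (h₁.2 _ c hc Set.inter_subset_left)

theorem eq (h₁ : IsMinFragment G H b Y₁ c₁) (h₂ : IsMinFragment G H b Y₂ c₂) (hb : b ∈ H)
    (hH : ConnectedOn G H) (hne : (Y₁ ∩ Y₂).Nonempty) : Y₁ = Y₂ :=
  h₂.2 _ _ h₁.1 (h₁.subset h₂.1 hb hH hne)

theorem connectedOn (h : IsMinFragment G H b Y c) : ConnectedOn G Y := by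
  intro x hx y hy
  have hfrag : IsFragment G H b {y | ReachableIn G (H \ {c}) x y} c :=
    isFragment_setOf_reachableIn h.1.attach_mem (h.1.subset hx)
      (fun e => h.1.attach_notMem (e ▸ hx)) fun hr => h.1.root_notMem (h.1.reachableIn hx hr).right
  have heq := h.2 _ _ hfrag fun z hz => (h.1.reachableIn hx hz).right
  exact h.1.reachableIn hx (heq.ge hy)

theorem reachableIn_attach (h : IsMinFragment G H b Y c) {v z : V} (hv : v ∈ Y) (hz : z ∈ Y)
    (hzv : z ≠ v) : ReachableIn G ((Y ∪ {c}) \ {v}) z c := by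
  by_contra hcon
  have hsub : {y | ReachableIn G ((Y ∪ {c}) \ {v}) z y} ⊆ Y := fun y hy =>
    hy.right.1.resolve_right fun e => hcon (e ▸ hy)
  have hfrag : IsFragment G H b {y | ReachableIn G ((Y ∪ {c}) \ {v}) z y} v :=
    ⟨⟨z, .refl ⟨Or.inl hz, hzv⟩⟩, hsub.trans h.1.subset, fun hr => h.1.root_notMem (hsub hr),
      h.1.subset hv, fun hr => hr.right.2 rfl, fun u hu w hw huw =>
        or_iff_not_imp_right.2 fun hwv =>
          .snoc hu huw ⟨h.1.mem_or_eq u (hsub hu) w hw huw, hwv⟩⟩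
  have hv' := (h.2 _ _ hfrag hsub).ge hv
  exact hv'.right.2 rfl

theorem linked (h : IsMinFragment G H b Y c) {u : V} (hu : u ∈ Y) : Linked G (Y ∪ {c}) c u := by
  refine ⟨Or.inr rfl, Or.inl hu, fun e => h.1.attach_notMem (e ▸ hu), ?_⟩
  rintro v z (hz | rfl) hzv
  · by_cases hv : v ∈ Y
    · exact Or.inl (h.reachableIn_attach hv hz hzv)
    · exact Or.inr ((h.connectedOn z hz u hu).mono (by grind))
  · exact Or.inl (.refl ⟨Or.inr rfl, hzv⟩)

end IsMinFragment

end Fragments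

/-! ### Critical sets and their splits -/

section Splits

variable {V : Type*} {G : SimpleGraph V}

/-- Every nonempty part of `S` that avoids `a` and `b` and does not exhaust `S \ {a, b}` has at
least three neighbours in the rest of `S`. -/
def ThreeLinked (G : SimpleGraph V) (S : Set V) (a b : V) : Prop :=
  ∀ X ⊆ S, X.Nonempty → a ∉ X → b ∉ X → (∃ e ∈ S \ X, e ≠ a ∧ e ≠ b) →
    ∀ p q, ∃ u ∈ X, ∃ v ∈ S \ X, G.Adj u v ∧ v ≠ p ∧ v ≠ q

/-- The properties of a minimal counterexample `S` with end vertices `a` and `b` on which the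
structural analysis rests. The function `β` gives the lengths of paths that induction on the degree
provides inside parts of `S` whose vertices lose at most one neighbour. The field `not_hasPathIn`
says that two such paths, together with two extra edges placed suitably, already make an `a`–`b`
path that is too long. -/
structure IsCritical (G : SimpleGraph V) (S : Set V) (a b : V) (β : V → V → ℕ) : Prop where
  finite : S.Finite
  left_mem : a ∈ S
  right_mem : b ∈ S
  ne : a ≠ b
  threeLinked : ThreeLinked G S a b
  hasLongPathIn : ∀ W ⊆ S, ∀ x y, Linked G W x y → (∃ w ∈ W, w ≠ x ∧ w ≠ y) →
    (∀ w ∈ W, w ≠ x → w ≠ y → w ≠ a ∧ w ≠ b ∧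
      ∀ v ∈ S \ W, ∀ v' ∈ S \ W, G.Adj w v → G.Adj w v' → v = v') →
    HasLongPathIn G W x y (β x y)
  bound_le_one : ∀ u ∈ S, u ≠ a → u ≠ b → ∀ c p, G.Adj u c →
    (∀ v ∈ S, G.Adj u v → v = c ∨ v = p) → β c u ≤ 1
  bound_comm : ∀ x y, β x y = β y x
  not_hasPathIn : ∀ x₁ y₁ x₂ y₂ l₀ k₁ l₁ k₂ l₂,
    HasPathIn G S a x₁ l₀ → HasPathIn G S y₁ x₂ l₁ → HasPathIn G S y₂ b l₂ →
    β x₁ y₁ ≤ k₁ → β x₂ y₂ ≤ k₂ → ((1 ≤ l₁ ∧ 2 ≤ l₀ + l₁ + l₂) ∨ 2 ≤ l₀ ∨ 2 ≤ l₂) →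
    ¬ HasPathIn G S a b (l₀ + k₁ + l₁ + k₂ + l₂)

/-- A partition of `S` into a side `D` of `a` and a side `H` of `b`, both connected even without
their end vertex, such that every vertex of `H` other than `b` has at most one neighbour in `D`.
The last condition is one-sided; a matching cut satisfies it in both directions. -/
structure IsSplit (G : SimpleGraph V) (S : Set V) (a b : V) (D H : Set V) : Prop where
  left_mem : a ∈ D
  right_mem : b ∈ H
  disjoint : Disjoint D H
  union_eq : D ∪ H = S
  connectedOn_left : ConnectedOn G D
  connectedOn_right : ConnectedOn G H
  connectedOn_left_sdiff : ConnectedOn G (D \ {a})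
  connectedOn_right_sdiff : ConnectedOn G (H \ {b})
  exists_left_ne : ∃ d ∈ D, d ≠ a
  exists_right_ne : ∃ d ∈ H, d ≠ b
  eq_of_adj : ∀ v ∈ H, v ≠ b → ∀ u ∈ D, ∀ u' ∈ D, G.Adj v u → G.Adj v u' → u = u'

/-- A fragment each of whose vertices is joined to the attachment vertex by a path as long as `β`
prescribes. -/
structure IsLongFragment (G : SimpleGraph V) (β : V → V → ℕ) (H : Set V) (b : V) (Y : Set V)
    (c : V) : Prop extends IsFragment G H b Y c where
  hasLongPathIn : ∀ u ∈ Y, HasLongPathIn G (Y ∪ {c}) c u (β c u)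

variable {S D H X Y : Set V} {a b c c' u v : V} {β : V → V → ℕ}

theorem ThreeLinked.symm (h : ThreeLinked G S a b) : ThreeLinked G S b a :=
  fun X hX hne hb ha he => h X hX hne ha hb (by grind)

namespace IsCritical

theorem symm (hC : IsCritical G S a b β) : IsCritical G S b a β where
  finite := hC.finite
  left_mem := hC.right_mem
  right_mem := hC.left_mem
  ne := hC.ne.symm
  threeLinked := hC.threeLinked.symm
  hasLongPathIn W hW x y hlink hne hdeg := hC.hasLongPathIn W hW x y hlink hne (by grind)
  bound_le_one u hu hb ha := hC.bound_le_one u hu ha hb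
  bound_comm := hC.bound_comm
  not_hasPathIn x₁ y₁ x₂ y₂ l₀ k₁ l₁ k₂ l₂ h₀ h₁ h₂ hk₁ hk₂ hl h := by
    refine hC.not_hasPathIn y₂ x₂ y₁ x₁ l₂ k₂ l₁ k₁ l₀ h₂.symm h₁.symm h₀.symm
      (by rwa [hC.bound_comm]) (by rwa [hC.bound_comm]) (by omega) ?_
    rw [show l₂ + k₂ + l₁ + k₁ + l₀ = l₀ + k₁ + l₁ + k₂ + l₂ by ring]
    exact h.symm

theorem false_of_concat (hC : IsCritical G S a b β) {W₀ W₁ W₂ W₃ W₄ : Set V} {x₁ y₁ x₂ y₂ : V}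
    {l₀ l₁ l₂ : ℕ} (h₀ : HasPathIn G W₀ a x₁ l₀) (h₁ : HasLongPathIn G W₁ x₁ y₁ (β x₁ y₁))
    (h₂ : HasPathIn G W₂ y₁ x₂ l₁) (h₃ : HasLongPathIn G W₃ x₂ y₂ (β x₂ y₂))
    (h₄ : HasPathIn G W₄ y₂ b l₂) (hS : W₀ ∪ W₁ ∪ W₂ ∪ W₃ ∪ W₄ ⊆ S)
    (hW₁ : W₀ ∩ W₁ ⊆ {x₁}) (hW₂ : (W₀ ∪ W₁) ∩ W₂ ⊆ {y₁}) (hW₃ : (W₀ ∪ W₁ ∪ W₂) ∩ W₃ ⊆ {x₂})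
    (hW₄ : (W₀ ∪ W₁ ∪ W₂ ∪ W₃) ∩ W₄ ⊆ {y₂})
    (hl : (1 ≤ l₁ ∧ 2 ≤ l₀ + l₁ + l₂) ∨ 2 ≤ l₀ ∨ 2 ≤ l₂) : False := by
  obtain ⟨k₁, hk₁, h₁⟩ := h₁
  obtain ⟨k₂, hk₂, h₃⟩ := h₃
  simp only [Set.union_subset_iff] at hS
  obtain ⟨⟨⟨⟨hS₀, hS₁⟩, hS₂⟩, hS₃⟩, hS₄⟩ := hS
  exact hC.not_hasPathIn x₁ y₁ x₂ y₂ l₀ k₁ l₁ k₂ l₂ (h₀.mono hS₀) (h₂.mono hS₂)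
    (h₄.mono hS₄) hk₁ hk₂ hl
    (((((h₀.append h₁ hW₁).append h₂ hW₂).append h₃ hW₃).append h₄ hW₄).mono
      (by simp only [Set.union_subset_iff]; tauto))

theorem false_of_path_through_fragment (hC : IsCritical G S a b β) {D' W₂ W₃ : Set V} {s : V}
    (hau : ReachableIn G D' a u) (hua : u ≠ a) (huv : G.Adj u v) (hv : v ∈ Y)
    (hvc : HasLongPathIn G (Y ∪ {c}) v c (β v c)) (hcs : ReachableIn G W₂ c s)
    (hsb : HasLongPathIn G W₃ s b (β s b)) (hS : D' ∪ Y ∪ W₂ ∪ W₃ ⊆ S)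
    (hD' : Disjoint D' (Y ∪ W₂ ∪ W₃)) (hY : Disjoint Y (W₂ ∪ W₃)) (hW : W₂ ∩ W₃ ⊆ {s}) :
    False := by
  have hc := hcs.left
  have hu := hau.right
  obtain ⟨l₀, p₀⟩ := hau.exists_hasPathIn
  obtain ⟨l₁, p₂⟩ := hcs.exists_hasPathIn
  have hl₀ := p₀.pos hua.symm
  have p₀' := p₀.append (.edge huv) (by grind)
  exact hC.false_of_concat p₀' hvc p₂ hsb (.refl (W := {b}) rfl)
    (by have := hC.right_mem; grind) (by grind) (by grind) (by grind) (by grind) (by omega)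

/-- The only neighbour of `Z` outside `Z ∪ {x, y}` is `e`, so a cut vertex of `Z ∪ {x, y}` would
leave a part of `Z` with just two neighbours. -/
theorem linked_of_neighbors (hC : IsCritical G S a b β) {Z : Set V} {x y e : V} (hZ : Z ⊆ S)
    (ha : a ∉ Z) (hb : b ∉ Z) (hxy : x ≠ y) (he : e ∈ S \ Z) (hea : e ≠ a) (heb : e ≠ b)
    (hN : ∀ u ∈ Z, ∀ v ∈ S, G.Adj u v → v ∈ Z ∪ {x, y} ∨ v = e) :
    Linked G (Z ∪ {x, y}) x y := by
  refine ⟨by simp, by simp, hxy, fun v z hz hzv => ?_⟩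
  by_contra! hno
  have hsub : {w | ReachableIn G ((Z ∪ {x, y}) \ {v}) z w} ⊆ Z := by
    intro w hw
    have := hw.right
    rcases this.1 with h | rfl | rfl
    exacts [h, absurd hw hno.1, absurd hw hno.2]
  obtain ⟨p, hp, q, hq, hpq, hqv, hqe⟩ := hC.threeLinked _ (hsub.trans hZ)
    ⟨z, .refl ⟨hz, hzv⟩⟩ (fun h => ha (hsub h)) (fun h => hb (hsub h))
    ⟨e, ⟨he.1, fun h => he.2 (hsub h)⟩, hea, heb⟩ v e
  exact hq.2 (.snoc hp hpq ⟨(hN p (hsub hp) q hq.1 hpq).resolve_right hqe, hqv⟩)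

theorem hasLongPathIn_of_neighbors (hC : IsCritical G S a b β) {Z : Set V} {x y e : V}
    (hZ : Z ⊆ S) (hne : Z.Nonempty) (ha : a ∉ Z) (hb : b ∉ Z) (hx : x ∈ S \ Z) (hy : y ∈ S \ Z)
    (hxy : x ≠ y) (he : e ∈ S \ Z) (hea : e ≠ a) (heb : e ≠ b)
    (hN : ∀ u ∈ Z, ∀ v ∈ S, G.Adj u v → v ∈ Z ∪ {x, y} ∨ v = e) :
    HasLongPathIn G (Z ∪ {x, y}) x y (β x y) := by
  obtain ⟨w, hw⟩ := hne
  have hlink := hC.linked_of_neighbors hZ ha hb hxy he hea heb hN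
  exact hC.hasLongPathIn _ (by grind) x y hlink ⟨w, Or.inl hw, by grind, by grind⟩ (by grind)

end IsCritical

theorem IsLongFragment.hasLongPathIn_attach {b' : V} (hY : IsLongFragment G β H b Y c)
    (hC : IsCritical G S a b' β) (hv : v ∈ Y) : HasLongPathIn G (Y ∪ {c}) v c (β v c) :=
  hC.bound_comm c v ▸ (hY.hasLongPathIn v hv).symm

namespace IsSplit

theorem left_subset (h : IsSplit G S a b D H) : D ⊆ S := h.union_eq ▸ Set.subset_union_left

theorem right_subset (h : IsSplit G S a b D H) : H ⊆ S := h.union_eq ▸ Set.subset_union_right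

theorem notMem_right (h : IsSplit G S a b D H) (hv : v ∈ D) : v ∉ H :=
  Set.disjoint_left.1 h.disjoint hv

theorem right_notMem_left (h : IsSplit G S a b D H) : b ∉ D :=
  Set.disjoint_right.1 h.disjoint h.right_mem

theorem left_notMem_right (h : IsSplit G S a b D H) : a ∉ H :=
  h.notMem_right h.left_mem

theorem finite_right (h : IsSplit G S a b D H) (hC : IsCritical G S a b β) : H.Finite :=
  hC.finite.subset h.right_subset

theorem exists_adj_left (h : IsSplit G S a b D H) (hC : IsCritical G S a b β)
    (hY : IsFragment G H b Y c) (p : V) : ∃ u ∈ D, ∃ v ∈ Y, G.Adj u v ∧ u ≠ p := by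
  have := h.union_eq
  have := h.disjoint
  have := hY.subset
  have := hY.mem_or_eq
  obtain ⟨d, hd, hda⟩ := h.exists_left_ne
  obtain ⟨v, hv, u, hu, hvu, huc, hup⟩ := hC.threeLinked Y (hY.subset.trans h.right_subset)
    hY.nonempty (fun ha => h.left_notMem_right (hY.subset ha)) hY.root_notMem
    ⟨d, by grind, hda, fun e => h.right_notMem_left (e ▸ hd)⟩ c p
  exact ⟨u, by grind, v, hv, hvu.symm, hup⟩

theorem isFullFragment_sdiff_root (h : IsSplit G S a b D H) :
    IsFullFragment G H b (H \ {b}) b := by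
  obtain ⟨d, hd, hdb⟩ := h.exists_right_ne
  refine ⟨⟨⟨d, hd, hdb⟩, Set.sdiff_subset, by simp, h.right_mem, by simp, by grind⟩,
    fun Y c hY => ?_⟩
  have := hY.1.subset
  have := hY.1.root_notMem
  grind

theorem sdiff_root_subset (h : IsSplit G S a b D H) (hY : IsFragment G H b Y b) :
    H \ {b} ⊆ Y := by
  intro v hv
  obtain ⟨y, hy⟩ := hY.nonempty
  exact h.connectedOn_right_sdiff.mem_of_closed
    ⟨hY.subset hy, fun e => hY.root_notMem (e ▸ hy)⟩ hy hv
    fun u hu w hw huw => (hY.mem_or_eq u hu.2 w hw.1 huw).resolve_right hw.2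

theorem exists_isMinFragment (h : IsSplit G S a b D H) (hC : IsCritical G S a b β) :
    ∃ Y c, IsMinFragment G H b Y c := by
  obtain ⟨Y, c, -, hY⟩ := h.isFullFragment_sdiff_root.1.exists_isMinFragment (h.finite_right hC)
  exact ⟨Y, c, hY⟩

theorem exists_isMinFullFragment (h : IsSplit G S a b D H) (hC : IsCritical G S a b β) :
    ∃ Y c, IsMinFullFragment G H b Y c :=
  h.isFullFragment_sdiff_root.exists_isMinFullFragment (h.finite_right hC)

theorem hasLongPathIn_of_isMinFragment (h : IsSplit G S a b D H) (hC : IsCritical G S a b β)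
    (hY : IsMinFragment G H b Y c) (hu : u ∈ Y) : HasLongPathIn G (Y ∪ {c}) c u (β c u) := by
  have hYS := hY.1.subset.trans h.right_subset
  have hcS := h.right_subset hY.1.attach_mem
  have hdeg : ∀ w ∈ Y, w ≠ a ∧ w ≠ b ∧
      ∀ v ∈ S \ (Y ∪ {c}), ∀ v' ∈ S \ (Y ∪ {c}), G.Adj w v → G.Adj w v' → v = v' := by
    have := h.union_eq
    have := hY.1.subset
    have := hY.1.root_notMem
    have := h.left_notMem_right
    exact fun w hw => ⟨by grind, by grind, fun v hv v' hv' hwv hwv' =>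
      h.eq_of_adj w (hY.1.subset hw) (by grind) v (by grind [hY.1.mem_or_eq w hw v])
        v' (by grind [hY.1.mem_or_eq w hw v']) hwv hwv'⟩
  by_cases hsing : ∃ w ∈ Y, w ≠ u
  · obtain ⟨w, hw, hwu⟩ := hsing
    exact hC.hasLongPathIn (Y ∪ {c}) (by grind) c u (hY.linked hu)
      ⟨w, Or.inl hw, fun e => hY.1.attach_notMem (e ▸ hw), hwu⟩ (by grind)
  push Not at hsing
  obtain ⟨u', hu', huc⟩ := hY.1.exists_adj_attach h.right_mem h.connectedOn_right
  obtain rfl := hsing u' hu'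
  obtain ⟨p, hp⟩ : ∃ p, ∀ v ∈ S, G.Adj u' v → v = c ∨ v = p := by
    by_cases hex : ∃ p ∈ S \ (Y ∪ {c}), G.Adj u' p
    · obtain ⟨p, hp, hup⟩ := hex
      exact ⟨p, fun v hv huv => by grind [G.loopless.irrefl u']⟩
    · exact ⟨c, fun v hv huv => by grind [G.loopless.irrefl u']⟩
  exact ⟨1, hC.bound_le_one u' (hYS hu) (hdeg u' hu).1 (hdeg u' hu).2.1 c p huc hp,
    .of_adj huc.symm (Or.inr rfl) (Or.inl hu)⟩

theorem isLongFragment (h : IsSplit G S a b D H) (hC : IsCritical G S a b β)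
    (hY : IsMinFragment G H b Y c) : IsLongFragment G β H b Y c :=
  ⟨hY.1, fun _ hu => h.hasLongPathIn_of_isMinFragment hC hY hu⟩

theorem attach_eq_of_adj (h : IsSplit G S a b D H) (hC : IsCritical G S a b β)
    (hX : IsLongFragment G β D a X c) (hY : IsLongFragment G β H b Y c') (hu : u ∈ X) (hv : v ∈ Y)
    (huv : G.Adj u v) : c = a ∧ c' = b := by
  by_contra hne
  obtain ⟨l₀, p₀⟩ :=
    (hX.reachableIn_attach_root h.left_mem h.connectedOn_left).symm.exists_hasPathIn
  obtain ⟨l₂, p₄⟩ :=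
    (hY.reachableIn_attach_root h.right_mem h.connectedOn_right).exists_hasPathIn
  have hl : 1 ≤ l₀ ∨ 1 ≤ l₂ :=
    (not_and_or.1 hne).imp (fun hca => p₀.pos (Ne.symm hca)) (fun hcb => p₄.pos hcb)
  have hXD : X ∪ {c} ⊆ D := Set.union_subset hX.subset (Set.singleton_subset_iff.2 hX.attach_mem)
  have hYH : Y ∪ {c'} ⊆ H := Set.union_subset hY.subset (Set.singleton_subset_iff.2 hY.attach_mem)
  have hS : D \ X ∪ (X ∪ {c}) ∪ {u, v} ∪ (Y ∪ {c'}) ∪ H \ Y ⊆ S := by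
    rw [← h.union_eq]; grind
  have hDH := @h.notMem_right
  exact hC.false_of_concat p₀ (hX.hasLongPathIn u hu) (.edge huv)
    (hY.hasLongPathIn_attach hC hv) p₄ hS (by grind) (by grind) (by grind) (by grind) (by omega)

end IsSplit

end Splits

section FullFragments

variable {V : Type*} {G : SimpleGraph V} {S D H F X Y : Set V} {a b c c' t : V} {β : V → V → ℕ}

theorem IsFragment.reachableIn_attach_of_reachableIn_root (h : IsFragment G H b Y c) {W : Set V}
    {x : V} (hW : W ⊆ H) (hx : x ∈ Y ∪ {c}) (hxb : ReachableIn G W x b) :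
    ReachableIn G (W ∩ (Y ∪ {c})) x c := by
  have hb := h.root_notMem
  rcases hx with hx | rfl
  · obtain ⟨u, v, hxu, hvW, hvY, huv⟩ := hxb.exists_adj_exit hx hb
    obtain rfl := (h.mem_or_eq u hxu.right.2 v (hW hvW) huv).resolve_left hvY
    exact (hxu.mono (by grind)).snoc huv ⟨hvW, Or.inr rfl⟩
  · exact .refl ⟨hxb.left, Or.inr rfl⟩

/-- A vertex separating part of `H \ F` from both `t` and `b` would cut off a minimal fragment
outside `F`. -/
theorem IsFullFragment.linked_sdiff (h : IsFullFragment G H b F t) (hb : b ∈ H)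
    (hH : ConnectedOn G H) (hfin : H.Finite) (htb : t ≠ b) : Linked G (H \ F) t b := by
  refine ⟨⟨h.1.attach_mem, h.1.attach_notMem⟩, ⟨hb, h.1.root_notMem⟩, htb, fun v z hz hzv => ?_⟩
  by_contra! hno
  by_cases hv : v ∈ H \ F
  · have hfrag : IsFragment G H b {y | ReachableIn G ((H \ F) \ {v}) z y} v := by
      refine ⟨⟨z, .refl ⟨hz, hzv⟩⟩, fun y hy => hy.right.1.1, hno.2, hv.1, fun h => h.right.2 rfl,
        fun x hx w hw hxw => or_iff_not_imp_right.2 fun hwv =>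
          hx.snoc hxw ⟨⟨hw, fun hwF => ?_⟩, hwv⟩⟩
      obtain rfl := (h.1.mem_or_eq w hwF x hx.right.1.1 hxw.symm).resolve_left hx.right.1.2
      exact hno.1 hx
    obtain ⟨Y, c, hYsub, hY⟩ := hfrag.exists_isMinFragment hfin
    obtain ⟨y, hy⟩ := hY.1.nonempty
    exact (hYsub hy).right.1.2 (h.2 _ _ hY hy)
  · exact hno.2 ((h.1.reachableIn_root hb hH hz).mono (by grind))

theorem IsMinFragment.isMinFullFragment (h : IsMinFragment G H b Y c)
    (huniq : ∀ Y' c', IsMinFragment G H b Y' c' → Y' = Y) : IsMinFullFragment G H b Y c :=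
  ⟨⟨h.1, fun Y' c' h' => (huniq Y' c' h').subset⟩, fun _ _ h' hsub => h.2 _ _ h'.1 hsub⟩

namespace IsSplit

theorem hasLongPathIn_sdiff_of_isFullFragment (h : IsSplit G S a b D H)
    (hC : IsCritical G S a b β) (hF : IsFullFragment G H b F t) (htb : t ≠ b)
    (hne : ∃ e ∈ H \ F, e ≠ t ∧ e ≠ b) : HasLongPathIn G (H \ F) t b (β t b) := by
  refine hC.hasLongPathIn _ (Set.sdiff_subset.trans h.right_subset) t b
    (hF.linked_sdiff h.right_mem h.connectedOn_right (h.finite_right hC) htb) hne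
    fun w hw hwt hwb => ⟨fun e => h.left_notMem_right (e ▸ hw.1), hwb, ?_⟩
  have mem_left : ∀ v ∈ S \ (H \ F), G.Adj w v → v ∈ D := by
    intro v hv hwv
    have := h.union_eq
    have := hF.1.mem_or_eq v
    grind [G.adj_comm]
  exact fun v hv v' hv' hwv hwv' =>
    h.eq_of_adj w hw.1 hwb v (mem_left v hv hwv) v' (mem_left v' hv' hwv') hwv hwv'

/-- Otherwise `H \ F` carries a long `t`–`b` path, which continues an `a`–`t` path through a
minimal fragment contained in `F`. -/
theorem subset_of_isFullFragment (h : IsSplit G S a b D H) (hC : IsCritical G S a b β)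
    (hF : IsFullFragment G H b F t) : H ⊆ F ∪ {b, t} := by
  by_contra hcon
  obtain ⟨e, heH, he⟩ := Set.not_subset.1 hcon
  have htb : t ≠ b := by
    rintro rfl
    have := h.sdiff_root_subset hF.1
    grind
  have htb_long := h.hasLongPathIn_sdiff_of_isFullFragment hC hF htb ⟨e, by grind⟩
  obtain ⟨Y, c, hY⟩ := h.exists_isMinFragment hC
  have hYF := hF.2 _ _ hY
  have hcF : c ∈ F ∪ {t} := by
    obtain ⟨y, hy, hyc⟩ := hY.1.exists_adj_attach h.right_mem h.connectedOn_right
    exact hF.1.mem_or_eq y (hYF hy) c hY.1.attach_mem hyc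
  have hct := hF.1.reachableIn_attach_of_reachableIn_root Set.sdiff_subset hcF
    (hY.1.reachableIn_attach_root h.right_mem h.connectedOn_right)
  obtain ⟨u, hu, v, hv, huv, hua⟩ := h.exists_adj_left hC hY.1 a
  have hYH := hY.1.subset
  have hS : D ∪ Y ∪ (H \ Y) ∩ (F ∪ {t}) ∪ H \ F ⊆ S := by rw [← h.union_eq]; grind
  refine hC.false_of_path_through_fragment (h.connectedOn_left a h.left_mem u hu) hua huv hv
    ((h.isLongFragment hC hY).hasLongPathIn_attach hC hv) hct htb_long hS
    (h.disjoint.mono_right (by grind)) (Set.disjoint_left.2 (by grind)) (by grind)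

theorem eq_attach_of_adj_root (h : IsSplit G S a b D H) (hC : IsCritical G S a b β)
    (hF : IsFullFragment G H b F t) (htb : t ≠ b) {v : V} (hv : v ∈ H) (hbv : G.Adj b v) :
    v = t := by
  have hbF := hF.1.root_notMem
  rcases h.subset_of_isFullFragment hC hF hv with hvF | rfl | rfl
  · grind [hF.1.mem_or_eq v hvF b h.right_mem hbv.symm]
  · exact absurd hbv (G.loopless.irrefl v)
  · rfl

theorem attach_mem_and_reachableIn_root (h : IsSplit G S a b D H) (hC : IsCritical G S a b β)
    (hF : IsFullFragment G H b F t) {B : Set V} (hBH : B ⊆ H) (hB : ConnectedOn G B) (hb : b ∈ B)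
    (hne : ∃ d ∈ B, d ≠ b) : t ∈ B ∧ ReachableIn G {t, b} t b := by
  by_cases htb : t = b
  · subst htb
    exact ⟨hb, .refl (by simp)⟩
  obtain ⟨d, hd, hdb⟩ := hne
  obtain ⟨u, ⟨-, rfl⟩, v, hv, huv⟩ := (hB b hb d hd).exists_adj_exit_mem (X := {b}) rfl hdb
  obtain rfl := h.eq_attach_of_adj_root hC hF htb (hBH hv.1) huv
  exact ⟨hv.1, .of_adj huv.symm (by simp) (by simp)⟩

/-- If `X` and `Y` are not adjacent, then `X` carries a long `c'`–`b` path, which continues an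
`a`–`c'` path through `Y`. -/
theorem false_of_subset_isMinFragment (h : IsSplit G S a b D H) (hC : IsCritical G S a b β)
    (hX : IsLongFragment G β D a X c) (hca : c ≠ a) (hY : IsMinFragment G H b Y c')
    (hcb : c' ≠ b) (hH : H ⊆ Y ∪ {b, c'}) : False := by
  have hYlong := h.isLongFragment hC hY
  have hXY : ∀ u ∈ X, ∀ v ∈ Y, ¬ G.Adj u v := fun u hu v hv huv =>
    hca (h.attach_eq_of_adj hC hX hYlong hu hv huv).1
  have hXH : ∀ z ∈ X, z ∉ H := fun z hz => h.notMem_right (hX.subset hz)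
  have hXD := hX.subset
  have hYH := hY.1.subset
  have hc'H := hY.1.attach_mem
  have hlong : HasLongPathIn G (X ∪ {c', b}) c' b (β c' b) := by
    refine hC.hasLongPathIn_of_neighbors (e := c) (hXD.trans h.left_subset) hX.nonempty
      hX.root_notMem (fun hb => hXH b hb h.right_mem) ⟨h.right_subset hc'H, fun hc => hXH _ hc hc'H⟩
      ⟨hC.right_mem, fun hb => hXH b hb h.right_mem⟩ hcb
      ⟨h.left_subset hX.attach_mem, hX.attach_notMem⟩ hca
      (fun e => h.right_notMem_left (e ▸ hX.attach_mem)) fun u hu v hv huv => ?_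
    have := h.union_eq
    have := hX.mem_or_eq u hu v
    grind
  obtain ⟨u, hu, v, hv, huv, hua⟩ := h.exists_adj_left hC hY.1 a
  have huX : u ∉ X := fun huX => hXY u huX v hv huv
  have hau := (hX.reachableIn_root h.left_mem h.connectedOn_left ⟨hu, huX⟩).symm
  have hb := h.right_mem
  have hbY := hY.1.root_notMem
  have hcY := hY.1.attach_notMem
  have hS : D \ X ∪ Y ∪ {c'} ∪ (X ∪ {c', b}) ⊆ S := by rw [← h.union_eq]; grind
  have hDH := @h.notMem_right
  exact hC.false_of_path_through_fragment hau hua huv hv (hYlong.hasLongPathIn_attach hC hv)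
    (.refl (W := {c'}) rfl) hlong hS (Set.disjoint_left.2 (by grind))
    (Set.disjoint_left.2 (by grind)) (by grind)

end IsSplit

end FullFragments

section MovingFragments

variable {V : Type*} {G : SimpleGraph V} {S D H X Y A B W : Set V} {a b c c' z : V}
  {β : V → V → ℕ}

/-- A fragment that is not full, maximal with respect to inclusion among these. -/
structure IsMaxNonfullFragment (G : SimpleGraph V) (H : Set V) (b : V) (W : Set V) (z : V) :
    Prop extends IsFragment G H b W z where
  not_isFullFragment : ¬ IsFullFragment G H b W z
  eq_of_subset : ∀ W' z', IsFragment G H b W' z' → W ⊆ W' → ¬ IsFullFragment G H b W' z' → W' = W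

namespace IsFragment

theorem exists_isMaxNonfullFragment (h : IsFragment G H b W z)
    (hfull : ¬ IsFullFragment G H b W z) (hH : H.Finite) :
    ∃ W' z', W ⊆ W' ∧ IsMaxNonfullFragment G H b W' z' := by
  have hfin : {W | ∃ z, IsFragment G H b W z ∧ ¬ IsFullFragment G H b W z}.Finite :=
    hH.finite_subsets.subset fun _ ⟨_, hW, _⟩ => hW.subset
  obtain ⟨W', hWW', ⟨z', hW', hfull'⟩, hmax⟩ := hfin.exists_le_maximal ⟨z, h, hfull⟩
  exact ⟨W', z', hWW', hW', hfull', fun Z d hZ hsub hZfull =>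
    (hmax ⟨d, hZ, hZfull⟩ hsub).antisymm hsub⟩

theorem component (h : IsFragment G H b Y c) {x : V} (hx : x ∈ Y) :
    IsFragment G H b {y | ReachableIn G Y x y} c where
  nonempty := ⟨x, .refl hx⟩
  subset _ hy := h.subset hy.right
  root_notMem hb := h.root_notMem hb.right
  attach_mem := h.attach_mem
  attach_notMem hc := h.attach_notMem hc.right
  mem_or_eq u hu v hv huv := (h.mem_or_eq u hu.right v hv huv).imp_left (hu.snoc huv)

end IsFragment

/-- The two long segments run through `Y₁` and `Y₂`; they are joined to `a` and to each other by
the three edges `u₁v₁`, `u₂v₂` and `zw` between the two sides, in one of two orders. -/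
theorem IsCritical.false_of_weave (hC : IsCritical G S a b β) {P₁ P₂ Q₁ Q₂ Y₁ Y₂ : Set V}
    {u₁ v₁ u₂ v₂ z w c₁ c₂ : V} (hS : P₁ ∪ P₂ ∪ Q₁ ∪ Q₂ ∪ Y₁ ∪ Y₂ ⊆ S)
    (hP : Disjoint P₁ P₂) (hQ : Disjoint Q₁ Q₂) (hY : Disjoint Y₁ Y₂)
    (hQY : Disjoint (Q₁ ∪ Q₂) (Y₁ ∪ Y₂)) (hPQY : Disjoint (P₁ ∪ P₂) (Q₁ ∪ Q₂ ∪ Y₁ ∪ Y₂))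
    (hv₁ : v₁ ∈ Y₁) (hv₂ : v₂ ∈ Y₂)
    (huv₁ : G.Adj u₁ v₁) (huv₂ : G.Adj u₂ v₂) (hzw : G.Adj z w)
    (p₁ : HasLongPathIn G (Y₁ ∪ {c₁}) v₁ c₁ (β v₁ c₁))
    (p₂ : HasLongPathIn G (Y₂ ∪ {c₂}) v₂ c₂ (β v₂ c₂))
    (hc₁b : ReachableIn G Q₁ c₁ b) (hwc₂ : ReachableIn G Q₂ w c₂)
    (h : (ReachableIn G P₁ a z ∧ ReachableIn G P₂ u₂ u₁) ∨
      (ReachableIn G P₁ a u₂ ∧ ReachableIn G P₂ z u₁)) : False := by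
  simp only [Set.disjoint_union_left, Set.disjoint_union_right] at hQY hPQY
  simp only [Set.disjoint_left] at hP hQ hY hQY hPQY
  simp only [Set.union_subset_iff] at hS
  have := hc₁b.left
  have := hc₁b.right
  have := hwc₂.left
  have := hwc₂.right
  obtain ⟨l₂, hc₁b⟩ := hc₁b.exists_hasPathIn
  rcases h with ⟨haz, hu₂₁⟩ | ⟨hau, hzu⟩
  · have := haz.left
    have := haz.right
    have := hu₂₁.left
    have := hu₂₁.right
    obtain ⟨l₀, hac₂⟩ : ∃ n, HasPathIn G (P₁ ∪ Q₂) a c₂ n :=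
      (((haz.mono (by grind)).snoc hzw (by grind)).trans (hwc₂.mono (by grind))).exists_hasPathIn
    obtain ⟨l₁, hv₂₁⟩ : ∃ n, HasPathIn G (P₂ ∪ {v₁, v₂}) v₂ v₁ n :=
      (((hu₂₁.mono (by grind)).cons huv₂.symm (by grind)).snoc huv₁ (by grind)).exists_hasPathIn
    have hl₀ := hac₂.pos (by grind)
    have hl₁ := hv₂₁.pos (by grind)
    exact hC.false_of_concat hac₂ (hC.bound_comm v₂ c₂ ▸ p₂.symm) hv₂₁ p₁ hc₁b
      (by grind) (by grind) (by grind) (by grind) (by grind) (by omega)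
  · have := hau.left
    have := hau.right
    have := hzu.left
    have := hzu.right
    obtain ⟨l₀, hav₂⟩ : ∃ n, HasPathIn G (P₁ ∪ {v₂}) a v₂ n :=
      ((hau.mono (by grind)).snoc huv₂ (by grind)).exists_hasPathIn
    obtain ⟨l₁, hcv⟩ : ∃ n, HasPathIn G (Q₂ ∪ P₂ ∪ {v₁}) c₂ v₁ n :=
      ((hwc₂.symm.mono (by grind)).trans
        (((hzu.mono (by grind)).cons hzw.symm (by grind)).snoc huv₁ (by grind))).exists_hasPathIn
    have hl₀ := hav₂.pos (by grind)
    have hl₁ := hcv.pos (by grind)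
    exact hC.false_of_concat hav₂ p₂ hcv p₁ hc₁b
      (by grind) (by grind) (by grind) (by grind) (by grind) (by omega)

namespace IsSplit

theorem exists_isMinFragment_root (h : IsSplit G S a b D H) (h' : IsSplit G S b a H D)
    (hC : IsCritical G S a b β) (hX : ∃ X, IsMinFragment G D a X a) :
    ∃ Y, IsMinFragment G H b Y b := by
  obtain ⟨X, hX⟩ := hX
  obtain ⟨Y, c, hY⟩ := h.exists_isMinFragment hC
  obtain ⟨u, hu, v, hv, huv, hua⟩ := h.exists_adj_left hC hY.1 a
  obtain ⟨-, rfl⟩ := h.attach_eq_of_adj hC (h'.isLongFragment hC.symm hX) (h.isLongFragment hC hY)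
    (h'.sdiff_root_subset hX.1 ⟨hu, hua⟩) hv huv
  exact ⟨Y, hY⟩

theorem false_of_unique_isMinFragment (h : IsSplit G S a b D H) (h' : IsSplit G S b a H D)
    (hC : IsCritical G S a b β) (hD : ∀ X, ¬ IsMinFragment G D a X a)
    (hH : ∀ Y, ¬ IsMinFragment G H b Y b) (hX : IsMinFragment G D a X c)
    (huniq : ∀ X' c', IsMinFragment G D a X' c' → X' = X) : False := by
  have hca : c ≠ a := by rintro rfl; exact hD _ hX
  have hDX := h'.subset_of_isFullFragment hC.symm (hX.isMinFullFragment huniq).1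
  have hXlong := h'.isLongFragment hC.symm hX
  have exists_adj : ∀ Y c', IsMinFragment G H b Y c' → ∃ v ∈ Y, G.Adj c v := by
    intro Y c' hY
    obtain ⟨u, hu, v, hv, huv, hua⟩ := h.exists_adj_left hC hY.1 a
    rcases hDX hu with huX | rfl | rfl
    · exact absurd (h.attach_eq_of_adj hC hXlong (h.isLongFragment hC hY) huX hv huv).1 hca
    · exact absurd rfl hua
    · exact ⟨v, hv, huv⟩
  obtain ⟨Y, c', hY⟩ := h.exists_isMinFragment hC
  have hcb : c' ≠ b := by rintro rfl; exact hH _ hY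
  have huniqY : ∀ Y' c', IsMinFragment G H b Y' c' → Y' = Y := by
    intro Y' c'' hY'
    obtain ⟨v, hv, hcv⟩ := exists_adj Y c' hY
    obtain ⟨v', hv', hcv'⟩ := exists_adj Y' c'' hY'
    obtain rfl := h'.eq_of_adj c hX.1.attach_mem hca v (hY.1.subset hv) v' (hY'.1.subset hv')
      hcv hcv'
    exact hY'.eq hY h.right_mem h.connectedOn_right ⟨v, hv', hv⟩
  exact h.false_of_subset_isMinFragment hC hXlong hca hY hcb
    (h.subset_of_isFullFragment hC (hY.isMinFullFragment huniqY).1)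

theorem attach_ne_root (h : IsSplit G S a b D H) (hW : IsFragment G H b W z)
    (hfull : ¬ IsFullFragment G H b W z) : z ≠ b := by
  rintro rfl
  refine hfull ⟨hW, fun Y c hY y hy => h.sdiff_root_subset hW ⟨hY.1.subset hy, ?_⟩⟩
  exact fun e => hY.1.root_notMem (e ▸ hy)

theorem exists_reachableIn_right (h' : IsSplit G S b a B A) (hC : IsCritical G S a b β)
    (hW : IsFragment G A a W z) {x : V} (hx : x ∈ W) :
    ∃ u ∈ B, u ≠ b ∧ ReachableIn G (W ∪ {u}) x u := by
  obtain ⟨u, hu, v, hv, huv, hub⟩ := h'.exists_adj_left hC.symm (hW.component hx) b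
  exact ⟨u, hu, hub, (ReachableIn.mono hv Set.subset_union_left).snoc huv.symm (Or.inr rfl)⟩

theorem connectedOn_union_fragment (h' : IsSplit G S b a B A) (hC : IsCritical G S a b β)
    (hW : IsFragment G A a W z) : ConnectedOn G (B ∪ W) := by
  have to_b : ∀ x ∈ B ∪ W, ReachableIn G (B ∪ W) x b := by
    rintro x (hx | hx)
    · exact (h'.connectedOn_left x hx b h'.left_mem).mono Set.subset_union_left
    · obtain ⟨u, hu, -, hxu⟩ := h'.exists_reachableIn_right hC hW hx
      exact (hxu.mono (by grind)).trans ((h'.connectedOn_left u hu b h'.left_mem).mono (by grind))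
  exact fun x hx y hy => (to_b x hx).trans (to_b y hy).symm

theorem connectedOn_union_fragment_sdiff (h' : IsSplit G S b a B A) (hC : IsCritical G S a b β)
    (hW : IsFragment G A a W z) : ConnectedOn G ((B ∪ W) \ {b}) := by
  have hbW : b ∉ W := fun hb => h'.left_notMem_right (hW.subset hb)
  have to_left : ∀ x ∈ (B ∪ W) \ {b}, ∃ u ∈ B \ {b}, ReachableIn G ((B ∪ W) \ {b}) x u := by
    rintro x ⟨hx | hx, hxb⟩
    · exact ⟨x, ⟨hx, hxb⟩, .refl ⟨Or.inl hx, hxb⟩⟩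
    · obtain ⟨u, hu, hub, hxu⟩ := h'.exists_reachableIn_right hC hW hx
      exact ⟨u, ⟨hu, hub⟩, hxu.mono (by grind)⟩
  intro x hx y hy
  obtain ⟨u, hu, hxu⟩ := to_left x hx
  obtain ⟨v, hv, hyv⟩ := to_left y hy
  exact (hxu.trans ((h'.connectedOn_left_sdiff u hu v hv).mono (by grind))).trans hyv.symm

/-- The condition on the edges between the sides survives the move because the attachment vertex
`z` is the only vertex of `A \ W` with neighbours in `W`. -/
theorem move_fragment (h : IsSplit G S a b A B) (h' : IsSplit G S b a B A)
    (hC : IsCritical G S a b β) (hW : IsFragment G A a W z) (hfull : ¬ IsFullFragment G A a W z) :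
    IsSplit G S a b (A \ W) (B ∪ W) where
  left_mem := ⟨h.left_mem, hW.root_notMem⟩
  right_mem := Or.inl h.right_mem
  disjoint := Set.disjoint_union_right.2
    ⟨h.disjoint.mono_left Set.sdiff_subset, Set.disjoint_sdiff_left⟩
  union_eq := by
    have := hW.subset
    rw [← h.union_eq]
    grind
  connectedOn_left := hW.connectedOn_sdiff h.left_mem h.connectedOn_left
  connectedOn_right := h'.connectedOn_union_fragment hC hW
  connectedOn_left_sdiff := by
    have hz : z ∈ A \ {a} := ⟨hW.attach_mem, h'.attach_ne_root hW hfull⟩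
    have hWz : IsFragment G (A \ {a}) z W z :=
      ⟨hW.nonempty, Set.subset_sdiff_singleton hW.subset hW.root_notMem, hW.attach_notMem, hz,
        hW.attach_notMem, fun u hu v hv => hW.mem_or_eq u hu v hv.1⟩
    rw [sdiff_right_comm]
    exact hWz.connectedOn_sdiff hz h.connectedOn_left_sdiff
  connectedOn_right_sdiff := h'.connectedOn_union_fragment_sdiff hC hW
  exists_left_ne := ⟨z, ⟨hW.attach_mem, hW.attach_notMem⟩, h'.attach_ne_root hW hfull⟩
  exists_right_ne := h.exists_right_ne.imp fun _ hd => ⟨Or.inl hd.1, hd.2⟩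
  eq_of_adj v hv hvb u hu u' hu' hvu hvu' := by
    rcases hv with hv | hv
    · exact h.eq_of_adj v hv hvb u hu.1 u' hu'.1 hvu hvu'
    · rw [(hW.mem_or_eq v hv u hu.1 hvu).resolve_left hu.2,
        (hW.mem_or_eq v hv u' hu'.1 hvu').resolve_left hu'.2]

end IsSplit

end MovingFragments

section MinFragmentUnion

variable {V : Type*} {G : SimpleGraph V} {S D H F Y : Set V} {a b c t : V} {β : V → V → ℕ}

/-- If `Y` had no other such neighbour, it would carry a long path from `a` to its only neighbour,
which extends through `Y₂` to `b`. -/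
theorem IsSplit.exists_adj_left_ne (h : IsSplit G S a b D H) (hC : IsCritical G S a b β)
    (hroot : ∀ Y c, IsMinFragment G H b Y c → c ≠ b) (hY : IsMinFragment G H b Y c) {Y₂ : Set V}
    {c₂ : V} (hY₂ : IsMinFragment G H b Y₂ c₂) (hne : Y₂ ≠ Y) (p : V) :
    ∃ u ∈ D, ∃ v ∈ Y, G.Adj u v ∧ u ≠ a ∧ u ≠ p := by
  by_contra! hcon
  obtain ⟨u, hu, v, hv, huv, hua⟩ := h.exists_adj_left hC hY.1 a
  obtain rfl := hcon u hu v hv huv hua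
  have hYH := hY.1.subset
  have hYH₂ := hY₂.1.subset
  have hc₂H := hY₂.1.attach_mem
  have hDH := @h.notMem_right
  have hYY₂ : Disjoint Y Y₂ := Set.disjoint_left.2 fun x hx hx₂ =>
    hne (hY₂.eq hY h.right_mem h.connectedOn_right ⟨x, hx₂, hx⟩)
  have hc₂Y : c₂ ∉ Y :=
    hY₂.1.attach_notMem_of_disjoint h.right_mem h.connectedOn_right hY.1 hYY₂.symm
  have p₁ : HasLongPathIn G (Y ∪ {a, u}) a u (β a u) := by
    refine hC.hasLongPathIn_of_neighbors (e := c) (hYH.trans h.right_subset) hY.1.nonempty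
      (fun ha => h.left_notMem_right (hYH ha)) hY.1.root_notMem
      ⟨hC.left_mem, fun ha => h.left_notMem_right (hYH ha)⟩
      ⟨h.left_subset hu, fun huY => h.notMem_right hu (hYH huY)⟩ hua.symm
      ⟨h.right_subset hY.1.attach_mem, hY.1.attach_notMem⟩
      (fun e => h.left_notMem_right (e ▸ hY.1.attach_mem)) (hroot _ _ hY) fun x hx y hy hxy => ?_
    have := h.union_eq
    grind [hY.1.mem_or_eq x hx y, hcon y, G.adj_comm]
  obtain ⟨w, hw, v₂, hv₂, hwv₂, hwa⟩ := h.exists_adj_left hC hY₂.1 a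
  have huv₂ : ReachableIn G (D \ {a} ∪ {v₂}) u v₂ :=
    ((h.connectedOn_left_sdiff u ⟨hu, hua⟩ w ⟨hw, hwa⟩).mono Set.subset_union_left).snoc hwv₂
      (Or.inr rfl)
  have hc₂b := hY.1.reachableIn_root_of_disjoint h.right_mem h.connectedOn_right hY₂.1 hYY₂
    ⟨⟨hc₂H, hc₂Y⟩, hY₂.1.attach_notMem⟩
  obtain ⟨l₁, p₂⟩ := huv₂.exists_hasPathIn
  obtain ⟨l₂, p₄⟩ := hc₂b.exists_hasPathIn
  have hv₂H := hYH₂ hv₂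
  have hl₁ : 1 ≤ l₁ := p₂.pos fun e => h.notMem_right hu (e ▸ hv₂H)
  have hl₂ : 1 ≤ l₂ := p₄.pos (hroot _ _ hY₂)
  rw [Set.disjoint_left] at hYY₂
  have haH := h.left_notMem_right
  have haD := h.left_mem
  have hS : {a} ∪ (Y ∪ {a, u}) ∪ (D \ {a} ∪ {v₂}) ∪ (Y₂ ∪ {c₂}) ∪ (H \ Y) \ Y₂ ⊆ S := by
    rw [← h.union_eq]; grind
  exact hC.false_of_concat (.refl (W := {a}) rfl) p₁ p₂
    ((h.isLongFragment hC hY₂).hasLongPathIn_attach hC hv₂) p₄ hS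
    (by grind) (by grind) (by grind) (by grind) (by omega)

/-- The union of all minimal fragments of `H` with respect to the root `b`. -/
def minFragmentUnion (G : SimpleGraph V) (H : Set V) (b : V) : Set V :=
  {v | ∃ Y c, IsMinFragment G H b Y c ∧ v ∈ Y}

theorem IsFullFragment.minFragmentUnion_subset (h : IsFullFragment G H b F t) :
    minFragmentUnion G H b ⊆ F := fun _ ⟨Y, c, hY, hv⟩ => h.2 Y c hY hv

theorem IsFragment.exists_reachableIn_minFragmentUnion (h : IsFragment G H b F t) (hfin : H.Finite)
    {w : V} (hw : w ∈ F) : ∃ y ∈ minFragmentUnion G H b, ReachableIn G F w y := by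
  obtain ⟨Y, c, hsub, hY⟩ := (h.component hw).exists_isMinFragment hfin
  obtain ⟨y, hy⟩ := hY.1.nonempty
  exact ⟨y, ⟨Y, c, hY, hy⟩, hsub hy⟩

/-- The walk enters the first minimal fragment it meets through its attachment vertex. -/
theorem ReachableIn.exists_attach_of_minFragmentUnion {M : Set V} {x y : V}
    (hxy : ReachableIn G M x y) (hM : M ⊆ H) (hx : x ∉ minFragmentUnion G H b)
    (hy : y ∈ minFragmentUnion G H b) :
    ∃ Y c, IsMinFragment G H b Y c ∧ ReachableIn G (M \ minFragmentUnion G H b) x c := by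
  obtain ⟨u, v, hxu, -, hv, huv⟩ :=
    hxy.exists_adj_exit (X := (minFragmentUnion G H b)ᶜ) hx (not_not.2 hy)
  obtain ⟨Y, c, hY, hvY⟩ := not_not.1 hv
  obtain rfl := (hY.1.mem_or_eq v hvY u (hM hxu.right.1) huv.symm).resolve_left
    fun huY => hxu.right.2 ⟨Y, c, hY, huY⟩
  exact ⟨Y, u, hY, hxu⟩

namespace IsMinFullFragment

variable (hb : b ∈ H) (hH : ConnectedOn G H)
include hb hH

/-- If `s` separated `t` from all minimal fragments, then the part of `F` it cuts off would be a
smaller full fragment. -/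
theorem exists_reachableIn_attach_of_notMem (hF : IsMinFullFragment G H b F t) (hfin : H.Finite)
    {s : V} (hst : s ≠ t) (hs : s ∉ minFragmentUnion G H b) :
    ∃ y ∈ minFragmentUnion G H b, ReachableIn G ((F ∪ {t}) \ {s}) t y := by
  by_contra! hno
  have hsub := hF.1.minFragmentUnion_subset
  have hFH := hF.1.1.subset
  have hbF := hF.1.1.root_notMem
  have ht : t ∈ (F ∪ {t}) \ {s} := ⟨Or.inr rfl, hst.symm⟩
  obtain ⟨w, hw⟩ := hF.1.1.nonempty
  obtain ⟨y₀, hy₀, -⟩ := hF.1.1.exists_reachableIn_minFragmentUnion hfin hw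
  let P : Set V := {v | v ∈ F ∧ v ≠ s ∧ ¬ ReachableIn G ((F ∪ {t}) \ {s}) t v}
  have hP : minFragmentUnion G H b ⊆ P := fun v hv =>
    ⟨hsub hv, fun e => hs (e ▸ hv), hno v hv⟩
  have hclosed : ∀ u ∈ P, ∀ v ∈ H, G.Adj u v → v ∈ P ∨ v = s := by
    intro u hu v hv huv
    have hvt : ReachableIn G ((F ∪ {t}) \ {s}) t v → False := fun hr =>
      hu.2.2 (hr.snoc huv.symm ⟨Or.inl hu.1, hu.2.1⟩)
    have := hF.1.1.mem_or_eq u hu.1 v hv huv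
    have := ReachableIn.refl (G := G) ht
    grind
  by_cases hsF : s ∈ F
  · have hPfull : IsFullFragment G H b P s :=
      ⟨⟨⟨y₀, hP hy₀⟩, fun v hv => hFH hv.1, fun hb => hbF hb.1, hFH hsF, fun h => h.2.1 rfl,
        hclosed⟩, fun Y c hY y hy => hP ⟨Y, c, hY, hy⟩⟩
    have hPF := hF.2 _ _ hPfull fun v hv => hv.1
    exact ((hPF ▸ hsF : s ∈ P)).2.1 rfl
  · have hyt := hF.1.1.reachableIn_attach_of_reachableIn_root subset_rfl (Or.inl (hsub hy₀))
      (hH y₀ (hFH (hsub hy₀)) b hb)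
    exact hno y₀ hy₀ (hyt.symm.mono (by grind))

theorem exists_reachableIn_minFragmentUnion (hF : IsMinFullFragment G H b F t) (hfin : H.Finite)
    (htwo : ∀ Y c, IsMinFragment G H b Y c → ∃ Y₂ c₂, IsMinFragment G H b Y₂ c₂ ∧ Y₂ ≠ Y)
    {w : V} (hw : w ∈ F) (s : V) :
    ∃ x, (x = t ∨ x = w) ∧
      ∃ y ∈ minFragmentUnion G H b, ReachableIn G ((F ∪ {t}) \ {s}) x y := by
  have htF := hF.1.1.attach_notMem
  by_cases hst : s = t
  · obtain ⟨y, hy, hwy⟩ := hF.1.1.exists_reachableIn_minFragmentUnion hfin hw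
    exact ⟨w, Or.inr rfl, y, hy, hwy.mono (by grind)⟩
  by_cases hs : s ∈ minFragmentUnion G H b
  · obtain ⟨Y, c, hY, hsY⟩ := hs
    obtain ⟨Y₂, c₂, hY₂, hne⟩ := htwo Y c hY
    obtain ⟨y, hy⟩ := hY₂.1.nonempty
    have hyY : y ∉ Y := fun hyY => hne (hY₂.eq hY hb hH ⟨y, hy, hyY⟩)
    have hyt := hF.1.1.reachableIn_attach_of_reachableIn_root Set.sdiff_subset
      (Or.inl (hF.1.2 _ _ hY₂ hy)) (hY.1.reachableIn_root hb hH ⟨hY₂.1.subset hy, hyY⟩)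
    exact ⟨t, Or.inl rfl, y, ⟨Y₂, c₂, hY₂, hy⟩, hyt.symm.mono (by grind)⟩
  · exact ⟨t, Or.inl rfl, hF.exists_reachableIn_attach_of_notMem hb hH hfin hst hs⟩

theorem exists_disjoint_reachableIn_attach (hF : IsMinFullFragment G H b F t) (hfin : H.Finite)
    (htwo : ∀ Y c, IsMinFragment G H b Y c → ∃ Y₂ c₂, IsMinFragment G H b Y₂ c₂ ∧ Y₂ ≠ Y)
    {w : V} (hw : w ∈ F) (hwmin : w ∉ minFragmentUnion G H b) :
    ∃ (N₁ N₂ Y₁ Y₂ : Set V) (c₁ c₂ : V), IsMinFragment G H b Y₁ c₁ ∧ IsMinFragment G H b Y₂ c₂ ∧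
      Y₁ ≠ Y₂ ∧ N₁ ⊆ (F ∪ {t}) \ minFragmentUnion G H b ∧
      N₂ ⊆ (F ∪ {t}) \ minFragmentUnion G H b ∧ Disjoint N₁ N₂ ∧
      ReachableIn G N₁ t c₁ ∧ ReachableIn G N₂ w c₂ := by
  have hsub := hF.1.minFragmentUnion_subset
  have htF := hF.1.1.attach_notMem
  have hFH : F ∪ {t} ⊆ H :=
    Set.union_subset hF.1.1.subset (Set.singleton_subset_iff.2 hF.1.1.attach_mem)
  obtain ⟨M₁, hM₁, M₂, hM₂, hdisj, ⟨y₁, hy₁, hty₁⟩, y₂, hy₂, hwy₂⟩ :=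
    exists_disjoint_reachableIn (ne_of_mem_of_not_mem hw htF).symm
      (hF.exists_reachableIn_minFragmentUnion hb hH hfin htwo hw)
  obtain ⟨Y₁, c₁, hY₁, htc₁⟩ :=
    hty₁.exists_attach_of_minFragmentUnion (hM₁.trans hFH) (fun ht => htF (hsub ht)) hy₁
  obtain ⟨Y₂, c₂, hY₂, hwc₂⟩ :=
    hwy₂.exists_attach_of_minFragmentUnion (hM₂.trans hFH) hwmin hy₂
  refine ⟨_, _, Y₁, Y₂, c₁, c₂, hY₁, hY₂, ?_, Set.sdiff_subset_sdiff_left hM₁,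
    Set.sdiff_subset_sdiff_left hM₂, hdisj.mono Set.sdiff_subset Set.sdiff_subset, htc₁, hwc₂⟩
  rintro rfl
  obtain rfl := hY₁.1.attach_unique hb hH hY₂.1
  exact Set.disjoint_left.1 hdisj htc₁.right.1 hwc₂.right.1

end IsMinFullFragment

end MinFragmentUnion

section MaxNonfullFragments

variable {V : Type*} {G : SimpleGraph V} {S A B H F W : Set V} {a b r s u x y z : V}
  {β : V → V → ℕ}

namespace IsSplit

theorem attach_notMem_of_attach_ne_root (h : IsSplit G S a b B H) (hC : IsCritical G S a b β)
    (hF : IsFullFragment G H b F r) (hW : IsFragment G H b W z) (hzb : z ≠ b) : r ∉ W := by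
  intro hr
  have hrb : r ≠ b := fun e => hW.root_notMem (e ▸ hr)
  obtain ⟨-, hrb'⟩ := h.attach_mem_and_reachableIn_root hC hF subset_rfl h.connectedOn_right
    h.right_mem h.exists_right_ne
  obtain ⟨p, ⟨-, rfl⟩, q, ⟨hq, hqr⟩, hpq⟩ := hrb'.exists_adj_exit_mem (X := {r}) rfl hrb.symm
  obtain rfl := hq.resolve_left hqr
  rcases hW.mem_or_eq p hr q h.right_mem hpq with hqW | hqz
  · exact hW.root_notMem hqW
  · exact hzb hqz.symm

theorem subset_isFullFragment (h : IsSplit G S a b B H) (hC : IsCritical G S a b β)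
    (hF : IsFullFragment G H b F r) (hW : IsFragment G H b W z) (hzb : z ≠ b) : W ⊆ F := by
  intro v hv
  rcases h.subset_of_isFullFragment hC hF (hW.subset hv) with hvF | rfl | rfl
  · exact hvF
  · exact absurd hv hW.root_notMem
  · exact absurd hv (h.attach_notMem_of_attach_ne_root hC hF hW hzb)

end IsSplit

namespace IsFragment

theorem component_sdiff (hF : IsFragment G H b F r) (hW : IsFragment G H b W z) (hu : u ∈ F \ W)
    (hz : ¬ ReachableIn G (F \ W) u z) : IsFragment G H b {v | ReachableIn G (F \ W) u v} r where
  nonempty := ⟨u, .refl hu⟩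
  subset _ hv := hF.subset hv.right.1
  root_notMem hv := hF.root_notMem hv.right.1
  attach_mem := hF.attach_mem
  attach_notMem hv := hF.attach_notMem hv.right.1
  mem_or_eq p hp q hq hpq := by
    refine (hF.mem_or_eq p hp.right.1 q hq hpq).imp_left fun hqF => hp.snoc hpq ⟨hqF, fun hqW => ?_⟩
    obtain rfl := (hW.mem_or_eq q hqW p (hF.subset hp.right.1) hpq.symm).resolve_left hp.right.2
    exact hz hp

theorem component_union (hF : IsFragment G H b F r) (hW : IsFragment G H b W z) (hrW : r ∉ W)
    (hs : s ∈ F \ W ∪ {r}) (hy : y ∈ F \ W ∪ {r}) (hys : y ≠ s) (hyz : y = z ∨ s = z)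
    (hr : ¬ ReachableIn G ((F \ W ∪ {r}) \ {s}) y r) :
    IsFragment G H b ({v | ReachableIn G ((F \ W ∪ {r}) \ {s}) y v} ∪ W) s := by
  have mem_sdiff : ∀ v, ReachableIn G ((F \ W ∪ {r}) \ {s}) y v → v ∈ F \ W := fun v hv =>
    hv.right.1.resolve_right fun e => hr (e ▸ hv)
  have hFH := hF.subset
  have hbF := hF.root_notMem
  refine ⟨⟨y, Or.inl (.refl ⟨hy, hys⟩)⟩, ?_, ?_, ?_, ?_, ?_⟩
  · rintro v (hv | hv)
    exacts [hFH (mem_sdiff v hv).1, hW.subset hv]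
  · rintro (hv | hv)
    exacts [hbF (mem_sdiff b hv).1, hW.root_notMem hv]
  · rcases hs with hs | rfl
    exacts [hFH hs.1, hF.attach_mem]
  · rintro (hv | hv)
    exacts [hv.right.2 rfl, hs.elim (fun hs => hs.2 hv) fun e => hrW (e ▸ hv)]
  · rintro p (hp | hp) q hq hpq
    · by_cases hqs : q = s
      · exact Or.inr hqs
      by_cases hqW : q ∈ W
      · exact Or.inl (Or.inr hqW)
      refine Or.inl (Or.inl (ReachableIn.snoc hp hpq ⟨?_, hqs⟩))
      exact (hF.mem_or_eq p (mem_sdiff p hp).1 q hq hpq).imp_left fun hqF => ⟨hqF, hqW⟩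
    · rcases hW.mem_or_eq p hp q hq hpq with hqW | rfl
      · exact Or.inl (Or.inr hqW)
      · rcases hyz with rfl | rfl
        exacts [Or.inl (Or.inl (.refl ⟨hy, hys⟩)), Or.inr rfl]

end IsFragment

/-- A vertex `s` separating `{r, u}` from `{z, x}` would let `W` grow by a component of the rest:
the larger fragment is full by maximality of `W`, against the minimality of `F`, or, if `s = r`,
against the existence of a minimal fragment in the component of `u`. -/
theorem IsMaxNonfullFragment.exists_reachableIn_sdiff (hW : IsMaxNonfullFragment G H b W z)
    (hF : IsMinFullFragment G H b F r) (hH : H.Finite) (hWF : W ⊆ F) (hrW : r ∉ W)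
    (hconn : ConnectedOn G (F \ W ∪ {r})) (hz : z ∈ F \ W ∪ {r}) (hx : x ∈ F \ W ∪ {r})
    (hxz : x ≠ z) (hu : u ∈ F \ W) (s : V) :
    ∃ v, (v = r ∨ v = u) ∧ ∃ y ∈ ({z, x} : Set V), ReachableIn G ((F \ W ∪ {r}) \ {s}) v y := by
  by_contra! hsep
  have hs : s ∈ F \ W ∪ {r} := by
    by_contra hs
    exact hsep r (Or.inl rfl) z (by simp)
      ((hconn r (Or.inr rfl) z hz).mono (Set.subset_sdiff_singleton subset_rfl hs))
  obtain ⟨y, hy, hyzx, hys, hyz⟩ : ∃ y ∈ F \ W ∪ {r}, y ∈ ({z, x} : Set V) ∧ y ≠ s ∧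
      (y = z ∨ s = z) := by
    by_cases hsz : s = z
    · exact ⟨x, hx, by simp, hsz ▸ hxz, Or.inr hsz⟩
    · exact ⟨z, hz, by simp, Ne.symm hsz, Or.inl rfl⟩
  have hyr : ¬ ReachableIn G ((F \ W ∪ {r}) \ {s}) y r := fun hr =>
    hsep r (Or.inl rfl) y hyzx hr.symm
  have hyu : ¬ ReachableIn G ((F \ W ∪ {r}) \ {s}) y u := fun hu =>
    hsep u (Or.inr rfl) y hyzx hu.symm
  have hfrag := hF.1.1.component_union hW.toIsFragment hrW hs hy hys hyz hyr
  have hyW : y ∉ W := hy.elim (fun hy => hy.2) fun e => e ▸ hrW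
  have hfull := by_contra fun hnot =>
    hyW ((hW.eq_of_subset _ _ hfrag Set.subset_union_right hnot).subset (Or.inl (.refl ⟨hy, hys⟩)))
  have hrF := hF.1.1.attach_notMem
  by_cases hsr : s = r
  · subst hsr
    have hsub : F \ W ⊆ (F \ W ∪ {s}) \ {s} := fun v hv => ⟨Or.inl hv, fun e => hrF (e ▸ hv.1)⟩
    have huz : ¬ ReachableIn G (F \ W) u z := fun huz =>
      hsep u (Or.inr rfl) z (by simp) (huz.mono hsub)
    obtain ⟨X, c, hX, hXmin⟩ :=
      (hF.1.1.component_sdiff hW.toIsFragment hu huz).exists_isMinFragment hH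
    obtain ⟨v, hv⟩ := hXmin.1.nonempty
    have huv : ReachableIn G (F \ W) u v := hX hv
    rcases hfull.2 X c hXmin hv with hyv | hvW
    · exact hyu (ReachableIn.trans hyv (huv.mono hsub).symm)
    · exact huv.right.2 hvW
  · have hsub : {v | ReachableIn G ((F \ W ∪ {r}) \ {s}) y v} ∪ W ⊆ F := by
      rintro v (hv | hv)
      · exact (hv.right.1.resolve_right fun e => hyr (e ▸ hv)).1
      · exact hWF hv
    exact ((hF.2 _ _ hfull hsub).ge hu.1).elim hyu hu.2

namespace IsSplit

theorem mem_sdiff_union_attach_iff (h' : IsSplit G S b a B A) (hC : IsCritical G S a b β)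
    (hF : IsFullFragment G A a F r) (hW : IsFragment G A a W z)
    (hfull : ¬ IsFullFragment G A a W z) {v : V} :
    v ∈ F \ W ∪ {r} ↔ v ∈ A \ W ∧ (v = a → r = a) := by
  have := h'.subset_of_isFullFragment hC.symm hF
  have := hF.1.subset
  have := hF.1.attach_mem
  have := hF.1.root_notMem
  have := h'.attach_notMem_of_attach_ne_root hC.symm hF hW (h'.attach_ne_root hW hfull)
  grind

theorem connectedOn_sdiff_union_attach (h : IsSplit G S a b A B) (h' : IsSplit G S b a B A)
    (hC : IsCritical G S a b β) (hF : IsFullFragment G A a F r) (hW : IsFragment G A a W z)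
    (hfull : ¬ IsFullFragment G A a W z) : ConnectedOn G (F \ W ∪ {r}) := by
  have hsplit := h.move_fragment h' hC hW hfull
  have mem_iff := fun v => h'.mem_sdiff_union_attach_iff hC hF hW hfull (v := v)
  by_cases hra : r = a
  · rw [show F \ W ∪ {r} = A \ W by ext v; rw [mem_iff]; simp [hra]]
    exact hsplit.connectedOn_left
  · rw [show F \ W ∪ {r} = (A \ W) \ {a} by ext v; rw [mem_iff]; simp [hra]]
    exact hsplit.connectedOn_left_sdiff

theorem exists_disjoint_reachableIn_sdiff (h : IsSplit G S a b A B) (h' : IsSplit G S b a B A)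
    (hC : IsCritical G S a b β) (hW : IsMaxNonfullFragment G A a W z)
    (hF : IsMinFullFragment G A a F r) (hu : u ∈ A \ W) (hx : x ∈ A \ W) (hua : u ≠ a)
    (hur : u ≠ r) (hxa : x ≠ a) (hxz : x ≠ z) :
    ∃ P₁ ⊆ A \ W, ∃ P₂ ⊆ A \ W, Disjoint P₁ P₂ ∧
      ((ReachableIn G P₁ a z ∧ ReachableIn G P₂ x u) ∨
        (ReachableIn G P₁ a x ∧ ReachableIn G P₂ z u)) := by
  have mem_iff := fun v => h'.mem_sdiff_union_attach_iff hC hF.1 hW.toIsFragment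
    hW.not_isFullFragment (v := v)
  have hza := h'.attach_ne_root hW.toIsFragment hW.not_isFullFragment
  have hz := (mem_iff z).2 ⟨⟨hW.attach_mem, hW.attach_notMem⟩, fun e => absurd e hza⟩
  have hu' := (mem_iff u).2 ⟨hu, fun e => absurd e hua⟩
  have hx' := (mem_iff x).2 ⟨hx, fun e => absurd e hxa⟩
  obtain ⟨-, hra⟩ := h'.attach_mem_and_reachableIn_root hC.symm hF.1 subset_rfl h.connectedOn_left
    h.left_mem h.exists_left_ne
  obtain ⟨M₁, hM₁, M₂, hM₂, hM, ⟨y₁, hy₁, p₁⟩, y₂, hy₂, p₂⟩ := exists_disjoint_reachableIn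
    (Y := {z, x}) hur.symm
    (hW.exists_reachableIn_sdiff hF (h'.finite_right hC.symm)
      (h'.subset_isFullFragment hC.symm hF.1 hW.toIsFragment hza)
      (h'.attach_notMem_of_attach_ne_root hC.symm hF.1 hW.toIsFragment hza)
      (h.connectedOn_sdiff_union_attach h' hC hF.1 hW.toIsFragment hW.not_isFullFragment)
      hz hx' hxz (hu'.resolve_right hur))
  have haM₂ : a ∉ M₂ := fun ha => Set.disjoint_left.1 hM p₁.left
    (((mem_iff a).1 (hM₂ ha)).2 rfl ▸ ha)
  have hrM₁ := p₁.left
  have q₁ : ReachableIn G (M₁ ∪ {a}) a y₁ :=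
    (hra.symm.mono (by grind)).trans (p₁.mono Set.subset_union_left)
  refine ⟨M₁ ∪ {a}, Set.union_subset (fun v hv => ((mem_iff v).1 (hM₁ hv)).1)
    (Set.singleton_subset_iff.2 ⟨h.left_mem, hW.root_notMem⟩), M₂,
    fun v hv => ((mem_iff v).1 (hM₂ hv)).1,
    Set.disjoint_union_left.2 ⟨hM, Set.disjoint_singleton_left.2 haM₂⟩, ?_⟩
  have hne : y₁ ≠ y₂ := fun e => Set.disjoint_left.1 hM p₁.right (e ▸ p₂.right)
  rcases hy₁ with rfl | rfl <;> rcases hy₂ with rfl | rfl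
  · exact absurd rfl hne
  · exact Or.inl ⟨q₁, p₂.symm⟩
  · exact Or.inr ⟨q₁, p₂.symm⟩
  · exact absurd rfl hne

end IsSplit

end MaxNonfullFragments

section Weaving

variable {V : Type*} {G : SimpleGraph V} {S A B D F H W Y : Set V} {a b c t w x z : V}
  {β : V → V → ℕ}

namespace IsSplit

theorem exists_isLongFragment_sdiff (h' : IsSplit G S b a B A) (hC : IsCritical G S a b β)
    (hA : ∀ X, ¬ IsMinFragment G A a X a) (hW : IsFragment G A a W z)
    (hfull : ¬ IsFullFragment G A a W z) :
    ∃ X c, IsFragment G A a X c ∧ IsLongFragment G β (A \ W) a X c ∧ c ≠ a := by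
  obtain ⟨X, c, hX, hXW⟩ : ∃ X c, IsMinFragment G A a X c ∧ ¬ X ⊆ W := by
    by_contra! hcon
    exact hfull ⟨hW, hcon⟩
  have hdisj : Disjoint X W := Set.disjoint_left.2 fun v hv hvW =>
    hXW (hX.subset hW h'.right_mem h'.connectedOn_right ⟨v, hv, hvW⟩)
  have hcW := hX.1.attach_notMem_of_disjoint h'.right_mem h'.connectedOn_right hW hdisj
  refine ⟨X, c, hX.1, ⟨hX.1.sdiff hdisj hcW, (h'.isLongFragment hC.symm hX).hasLongPathIn⟩, ?_⟩
  rintro rfl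
  exact hA _ hX

theorem attach_ne_root_of_union_fragment (h : IsSplit G S a b A B) (h' : IsSplit G S b a B A)
    (hC : IsCritical G S a b β) (hA : ∀ X, ¬ IsMinFragment G A a X a) (hW : IsFragment G A a W z)
    (hfull : ¬ IsFullFragment G A a W z) (hY : IsMinFragment G (B ∪ W) b Y c) : c ≠ b := by
  rintro rfl
  have hsplit := h.move_fragment h' hC hW hfull
  obtain ⟨X, d, hX, hXlong, hda⟩ := h'.exists_isLongFragment_sdiff hC hA hW hfull
  obtain ⟨u, hu, v, hv, huv, hub⟩ := h'.exists_adj_left hC.symm hX c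
  exact hda (hsplit.attach_eq_of_adj hC hXlong (hsplit.isLongFragment hC hY) hv
    (hsplit.sdiff_root_subset hY.1 ⟨Or.inl hu, hub⟩) huv.symm).1

theorem exists_isMinFragment_ne (h : IsSplit G S a b A B) (h' : IsSplit G S b a B A)
    (hC : IsCritical G S a b β) (hA : ∀ X, ¬ IsMinFragment G A a X a) (hW : IsFragment G A a W z)
    (hfull : ¬ IsFullFragment G A a W z) (hY : IsMinFragment G (B ∪ W) b Y c) :
    ∃ Y₂ c₂, IsMinFragment G (B ∪ W) b Y₂ c₂ ∧ Y₂ ≠ Y := by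
  by_contra! huniq
  have hsplit := h.move_fragment h' hC hW hfull
  obtain ⟨X, d, -, hX, hda⟩ := h'.exists_isLongFragment_sdiff hC hA hW hfull
  exact hsplit.false_of_subset_isMinFragment hC hX hda hY
    (h.attach_ne_root_of_union_fragment h' hC hA hW hfull hY)
    (hsplit.subset_of_isFullFragment hC (hY.isMinFullFragment huniq).1)

theorem isFragment_inter_of_union_fragment (h : IsSplit G S a b A B) (h' : IsSplit G S b a B A)
    (hC : IsCritical G S a b β) (hW : IsFragment G A a W z) (hfull : ¬ IsFullFragment G A a W z)
    (hY : IsFragment G (B ∪ W) b Y c) : IsFragment G B b (Y ∩ B) c := by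
  obtain ⟨u, hu, v, hv, huv, huz⟩ := (h.move_fragment h' hC hW hfull).exists_adj_left hC hY z
  have hvB : v ∈ B := (hY.subset hv).resolve_right fun hvW =>
    (hW.mem_or_eq v hvW u hu.1 huv.symm).elim hu.2 huz
  obtain ⟨p, hp, q, hq, hpq⟩ :=
    (h.connectedOn_right v hvB b h.right_mem).exists_adj_exit_mem hv hY.root_notMem
  obtain rfl := (hY.mem_or_eq p hp.2 q (Or.inl hq.1) hpq).resolve_left hq.2
  exact ⟨⟨v, hv, hvB⟩, Set.inter_subset_right, fun hb => hY.root_notMem hb.1, hq.1,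
    fun hq' => hq.2 hq'.1, fun x hx y hy hxy =>
      (hY.mem_or_eq x hx.1 y (Or.inl hy) hxy).imp_left fun hyY => ⟨hyY, hy⟩⟩

theorem false_of_weave (h : IsSplit G S a b D H) (hC : IsCritical G S a b β)
    (hF : IsFullFragment G H b F t) (htb : ReachableIn G {t, b} t b) {Y₁ Y₂ P₁ P₂ N₁ N₂ : Set V}
    {c₁ c₂ u₁ v₁ u₂ v₂ : V} (hY₁ : IsMinFragment G H b Y₁ c₁) (hY₂ : IsMinFragment G H b Y₂ c₂)
    (hne : Y₁ ≠ Y₂) (hP₁ : P₁ ⊆ D) (hP₂ : P₂ ⊆ D) (hP : Disjoint P₁ P₂)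
    (hN₁ : N₁ ⊆ (F ∪ {t}) \ minFragmentUnion G H b)
    (hN₂ : N₂ ⊆ (F ∪ {t}) \ minFragmentUnion G H b) (hN : Disjoint N₁ N₂) (hv₁ : v₁ ∈ Y₁)
    (hv₂ : v₂ ∈ Y₂) (huv₁ : G.Adj u₁ v₁) (huv₂ : G.Adj u₂ v₂) (hzw : G.Adj z w)
    (htc₁ : ReachableIn G N₁ t c₁) (hwc₂ : ReachableIn G N₂ w c₂)
    (hpaths : (ReachableIn G P₁ a z ∧ ReachableIn G P₂ u₂ u₁) ∨
      (ReachableIn G P₁ a u₂ ∧ ReachableIn G P₂ z u₁)) : False := by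
  have hbF := hF.1.root_notMem
  have hFH : F ∪ {t} ⊆ H :=
    Set.union_subset hF.1.subset (Set.singleton_subset_iff.2 hF.1.attach_mem)
  have hbU : b ∉ minFragmentUnion G H b := fun hb => hbF (hF.minFragmentUnion_subset hb)
  have hQ : N₁ ∪ {t, b} ∪ N₂ ⊆ H \ minFragmentUnion G H b := by
    refine Set.union_subset (Set.union_subset (hN₁.trans (Set.sdiff_subset_sdiff_left hFH)) ?_)
      (hN₂.trans (Set.sdiff_subset_sdiff_left hFH))
    rintro v (rfl | rfl)
    exacts [⟨hF.1.attach_mem, (hN₁ htc₁.left).2⟩, ⟨h.right_mem, hbU⟩]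
  have hY : Y₁ ∪ Y₂ ⊆ H ∩ minFragmentUnion G H b := Set.union_subset
    (fun v hv => ⟨hY₁.1.subset hv, Y₁, c₁, hY₁, hv⟩)
    (fun v hv => ⟨hY₂.1.subset hv, Y₂, c₂, hY₂, hv⟩)
  have hQY : N₁ ∪ {t, b} ∪ N₂ ∪ (Y₁ ∪ Y₂) ⊆ H :=
    Set.union_subset (hQ.trans Set.sdiff_subset) (hY.trans Set.inter_subset_left)
  have hQ₁₂ : Disjoint (N₁ ∪ {t, b}) N₂ := by
    have htN := htc₁.left
    rw [Set.disjoint_left] at hN ⊢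
    grind
  refine hC.false_of_weave ?_ hP hQ₁₂ (Set.disjoint_left.2 fun v hv hv' =>
      hne (hY₁.eq hY₂ h.right_mem h.connectedOn_right ⟨v, hv, hv'⟩)) ?_ ?_ hv₁ hv₂ huv₁ huv₂ hzw
    ((h.isLongFragment hC hY₁).hasLongPathIn_attach hC hv₁)
    ((h.isLongFragment hC hY₂).hasLongPathIn_attach hC hv₂)
    ((htc₁.symm.mono Set.subset_union_left).trans (htb.mono Set.subset_union_right)) hwc₂ hpaths
  · simpa only [Set.union_assoc, h.union_eq] using
      Set.union_subset_union (Set.union_subset hP₁ hP₂) hQY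
  · exact Set.disjoint_of_subset hQ hY
      (Set.disjoint_sdiff_left.mono_right Set.inter_subset_right)
  · rw [Set.union_assoc (_ ∪ _)]
    exact h.disjoint.mono (Set.union_subset hP₁ hP₂) hQY

theorem mem_minFragmentUnion_of_adj_attach (h : IsSplit G S a b A B) (h' : IsSplit G S b a B A)
    (hC : IsCritical G S a b β) (hA : ∀ X, ¬ IsMinFragment G A a X a)
    (hW : IsMaxNonfullFragment G A a W z) (hw : w ∈ W) (hzw : G.Adj z w) :
    w ∈ minFragmentUnion G (B ∪ W) b := by
  by_contra hwmin
  have hsplit := h.move_fragment h' hC hW.toIsFragment hW.not_isFullFragment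
  have hroot := fun Y c => h.attach_ne_root_of_union_fragment h' hC hA hW.toIsFragment
    hW.not_isFullFragment (Y := Y) (c := c)
  have hwB : w ∉ B := h.notMem_right (hW.subset hw)
  obtain ⟨F, t, hF⟩ := hsplit.exists_isMinFullFragment hC
  obtain ⟨htB, htb⟩ := hsplit.attach_mem_and_reachableIn_root hC hF.1 Set.subset_union_left
    h.connectedOn_right h.right_mem h.exists_right_ne
  have hwF : w ∈ F := by
    rcases hsplit.subset_of_isFullFragment hC hF.1 (Or.inr hw) with hwF | rfl | rfl
    exacts [hwF, absurd h.right_mem hwB, absurd htB hwB]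
  obtain ⟨N₁, N₂, Y₁, Y₂, c₁, c₂, hY₁, hY₂, hne, hN₁, hN₂, hN, htc₁, hwc₂⟩ :=
    hF.exists_disjoint_reachableIn_attach hsplit.right_mem hsplit.connectedOn_right
      (hsplit.finite_right hC)
      (fun Y c => h.exists_isMinFragment_ne h' hC hA hW.toIsFragment hW.not_isFullFragment)
      hwF hwmin
  obtain ⟨F', r, hF'⟩ := h'.exists_isMinFullFragment hC.symm
  obtain ⟨u₁, hu₁, v₁, hv₁, huv₁, hu₁a, hu₁r⟩ :=
    hsplit.exists_adj_left_ne hC hroot hY₁ hY₂ hne.symm r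
  obtain ⟨u₂, hu₂, v₂, hv₂, huv₂, hu₂a, hu₂z⟩ := hsplit.exists_adj_left_ne hC hroot hY₂ hY₁ hne z
  obtain ⟨P₁, hP₁, P₂, hP₂, hP, hpaths⟩ :=
    h.exists_disjoint_reachableIn_sdiff h' hC hW hF' hu₁ hu₂ hu₁a hu₁r hu₂a hu₂z
  exact hsplit.false_of_weave hC hF.1 htb hY₁ hY₂ hne hP₁ hP₂ hP hN₁ hN₂ hN hv₁ hv₂ huv₁ huv₂ hzw
    htc₁ hwc₂ hpaths

/-- `W` meets a minimal fragment of `B ∪ W` at the neighbour of `z`; being connected and missing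
the attachment vertex in `B`, the component of `x` lies in it. -/
theorem exists_isMinFragment_union_mem (h : IsSplit G S a b A B) (h' : IsSplit G S b a B A)
    (hC : IsCritical G S a b β) (hA : ∀ X, ¬ IsMinFragment G A a X a)
    (hW : IsMaxNonfullFragment G A a W z) (hx : x ∈ W) :
    ∃ Y c, IsMinFragment G (B ∪ W) b Y c ∧ x ∈ Y ∧ IsFragment G B b (Y ∩ B) c := by
  obtain ⟨w, hxw, hwz⟩ := (hW.component hx).exists_adj_attach h.left_mem h.connectedOn_left
  have hxw : ReachableIn G W x w := hxw
  obtain ⟨Y, c, hY, hwY⟩ :=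
    h.mem_minFragmentUnion_of_adj_attach h' hC hA hW hxw.right hwz.symm
  have hfrag := h.isFragment_inter_of_union_fragment h' hC hW.toIsFragment hW.not_isFullFragment
    hY.1
  refine ⟨Y, c, hY, (hY.1.reachableIn hwY (hxw.symm.mono fun v hv => ⟨Or.inr hv, ?_⟩)).right, hfrag⟩
  rintro rfl
  exact h.notMem_right (hW.subset hv) hfrag.attach_mem

theorem not_isFullFragment_inter (h : IsSplit G S a b A B) (h' : IsSplit G S b a B A)
    (hC : IsCritical G S a b β) (hA : ∀ X, ¬ IsMinFragment G A a X a) (hW : IsFragment G A a W z)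
    (hfull : ¬ IsFullFragment G A a W z) (hY : IsMinFragment G (B ∪ W) b Y c) :
    ¬ IsFullFragment G B b (Y ∩ B) c := by
  intro hYfull
  have hsplit := h.move_fragment h' hC hW hfull
  obtain ⟨Y₂, c₂, hY₂, hne⟩ := h.exists_isMinFragment_ne h' hC hA hW hfull hY
  obtain ⟨X, d, hXY₂, hX⟩ := (h.isFragment_inter_of_union_fragment h' hC hW hfull
    hY₂.1).exists_isMinFragment (h.finite_right hC)
  obtain ⟨v, hv⟩ := hX.1.nonempty
  exact hne (hY₂.eq hY hsplit.right_mem hsplit.connectedOn_right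
    ⟨v, (hXY₂ hv).1, (hYfull.2 _ _ hX hv).1⟩)

end IsSplit

end Weaving

section TightSides

variable {V : Type*} {G : SimpleGraph V} {S A B F H W Y Y₁ Y₂ : Set V}
  {a b c c₁ c₂ r u w x z : V} {β : V → V → ℕ}

namespace IsFragment

theorem union (h₁ : IsFragment G H b Y₁ c₁) (h₂ : IsFragment G H b Y₂ c₂)
    (hc₁ : c₁ ∈ Y₂ ∪ {c₂}) (hc₂ : c₂ ∉ Y₁) : IsFragment G H b (Y₁ ∪ Y₂) c₂ where
  nonempty := h₁.nonempty.mono Set.subset_union_left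
  subset := Set.union_subset h₁.subset h₂.subset
  root_notMem hb := hb.elim h₁.root_notMem h₂.root_notMem
  attach_mem := h₂.attach_mem
  attach_notMem hc := hc.elim hc₂ h₂.attach_notMem
  mem_or_eq u hu v hv huv := by
    have := h₁.mem_or_eq u
    have := h₂.mem_or_eq u
    grind

theorem subset_of_attach_mem (h₁ : IsFragment G H b Y₁ c₁) (h₂ : IsFragment G H b Y₂ c₂)
    (hb : b ∈ H) (hH : ConnectedOn G H) (hc₁ : c₁ ∈ Y₂) (hc₂ : c₂ ∉ Y₁) : Y₁ ⊆ Y₂ := by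
  by_contra hsub
  obtain ⟨x, hx₁, hx₂⟩ := Set.not_subset.1 hsub
  have hbY : b ∈ Y₁ \ Y₂ := by
    refine hH.mem_of_closed (h₁.subset hx₁) ⟨hx₁, hx₂⟩ hb ?_
    rintro p ⟨hp, hp₁, hp₂⟩ q hq hpq
    grind [h₁.mem_or_eq p hp₁ q hq hpq, h₂.mem_or_eq q, hpq.symm]
  exact h₁.root_notMem hbY.1

theorem attach_eq_of_mem_inter (h₁ : IsFragment G H b Y₁ c₁) (h₂ : IsFragment G H b Y₂ c₂)
    (hb : b ∈ H) (hH : ConnectedOn G H) (hx : x ∈ Y₁ ∩ Y₂) (hc₁ : c₁ ∉ Y₂) (hc₂ : c₂ ∉ Y₁) :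
    c₁ = c₂ := by
  by_contra hne
  have hbY : b ∈ Y₁ ∩ Y₂ := by
    refine hH.mem_of_closed (h₁.subset hx.1) hx hb ?_
    rintro p ⟨-, hp₁, hp₂⟩ q hq hpq
    grind [h₁.mem_or_eq p hp₁ q hq hpq, h₂.mem_or_eq p hp₂ q hq hpq]
  exact h₁.root_notMem hbY.1

end IsFragment

theorem IsMaxNonfullFragment.subset_of_meets (hW : IsMaxNonfullFragment G H b W z) (hb : b ∈ H)
    (hH : ConnectedOn G H) (hsat : ∀ F, IsFragment G H b F z → F ⊆ W) (hF : IsFragment G H b F c)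
    (hfull : ¬ IsFullFragment G H b F c) (hw : w ∈ W) (hwF : w ∈ F ∪ {c}) :
    F ∪ {c} ⊆ W ∪ {z} := by
  by_cases hcW : c ∈ W
  · have := hsat _ (hF.union hW.toIsFragment (Or.inl hcW)
      (hF.attach_notMem_of_attach_mem hb hH hW.toIsFragment hcW))
    grind
  have hwF : w ∈ F := hwF.resolve_right fun e => hcW (e ▸ hw)
  by_cases hzF : z ∈ F
  · have hWF := hW.subset_of_attach_mem hF hb hH hzF hcW
    exact absurd (hW.eq_of_subset _ _ hF hWF hfull ▸ hzF) hW.attach_notMem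
  · obtain rfl := hF.attach_eq_of_mem_inter hW.toIsFragment hb hH ⟨hwF, hw⟩ hcW hzF
    exact Set.union_subset_union_left _ (hsat _ hF)

namespace IsSplit

theorem exists_isFragment_not_subset (h : IsSplit G S a b A B) (h' : IsSplit G S b a B A)
    (hC : IsCritical G S a b β) (hA : ∀ X, ¬ IsMinFragment G A a X a)
    (hB : ∀ Y, ¬ IsMinFragment G B b Y b) (hW : IsMaxNonfullFragment G A a W z) :
    ∃ F, IsFragment G A a F z ∧ ¬ F ⊆ W := by
  by_contra! hsat
  have hsplit := h.move_fragment h' hC hW.toIsFragment hW.not_isFullFragment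
  obtain ⟨x, hx⟩ := hW.nonempty
  obtain ⟨Y, c, hY, hxY, hYB⟩ := h.exists_isMinFragment_union_mem h' hC hA hW hx
  obtain ⟨u, hu, y, hy, huy, huz⟩ := hsplit.exists_adj_left hC hY.1 z
  have hyB : y ∈ B := (hY.1.subset hy).resolve_right fun hyW =>
    (hW.mem_or_eq y hyW u hu.1 huy.symm).elim hu.2 huz
  obtain ⟨v, ⟨-, hyv⟩, w, ⟨hwY, hw⟩, hvw⟩ := (hY.connectedOn y hy x hxY).exists_adj_exit_mem
    (X := {v | ReachableIn G (Y ∩ B) y v}) (.refl ⟨hy, hyB⟩)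
    fun hyx => h.notMem_right (hW.subset hx) hyx.right.2
  have hyv : ReachableIn G (Y ∩ B) y v := hyv
  have hwW : w ∈ W := (hY.1.subset hwY).resolve_left fun hwB => hw (hyv.snoc hvw ⟨hwY, hwB⟩)
  obtain ⟨W', z', hYW', hW'⟩ := hYB.exists_isMaxNonfullFragment
    (h.not_isFullFragment_inter h' hC hA hW.toIsFragment hW.not_isFullFragment hY)
    (h.finite_right hC)
  obtain ⟨Y', e, hY', hyY', hYA⟩ :=
    h'.exists_isMinFragment_union_mem h hC.symm hB hW' (hYW' ⟨hy, hyB⟩)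
  have hvY' : v ∈ Y' := (hY'.1.reachableIn hyY' (hyv.mono fun p hp =>
    ⟨Or.inr (hYW' hp), fun hpe => h.notMem_right hYA.attach_mem (hpe ▸ hp.2)⟩)).right
  have hsub := hW.subset_of_meets h.left_mem h.connectedOn_left hsat hYA
    (h'.not_isFullFragment_inter h hC.symm hB hW'.toIsFragment hW'.not_isFullFragment hY') hwW
    ((hY'.1.mem_or_eq v hvY' w (Or.inl (hW.subset hwW)) hvw).imp_left
      fun hwY' => ⟨hwY', hW.subset hwW⟩)
  exact (hsub ((hY'.1.mem_or_eq y hyY' u (Or.inl hu.1) huy.symm).imp_left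
    fun huY' => ⟨huY', hu.1⟩)).elim hu.2 huz

theorem attach_eq_of_isMaxNonfullFragment (h : IsSplit G S a b A B) (h' : IsSplit G S b a B A)
    (hC : IsCritical G S a b β) (hA : ∀ X, ¬ IsMinFragment G A a X a)
    (hB : ∀ Y, ¬ IsMinFragment G B b Y b) (hW : IsMaxNonfullFragment G A a W z)
    (hF : IsMinFullFragment G A a F r) : z = r := by
  have hza := h'.attach_ne_root hW.toIsFragment hW.not_isFullFragment
  obtain ⟨F', hF', hF'W⟩ := h.exists_isFragment_not_subset h' hC hA hB hW
  have hunion := hF'.union hW.toIsFragment (Or.inr rfl) hF'.attach_notMem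
  have hfull : IsFullFragment G A a (F' ∪ W) z := by
    by_contra hfull
    have := hW.eq_of_subset _ _ hunion Set.subset_union_right hfull
    exact hF'W (this ▸ Set.subset_union_left)
  have heq := hF.2 _ _ hfull (h'.subset_isFullFragment hC.symm hF.1 hunion hza)
  rcases h'.subset_of_isFullFragment hC.symm hF.1 hunion.attach_mem with hzF | hz | hz
  exacts [absurd (heq ▸ hzF) hunion.attach_notMem, absurd hz hza, hz]

end IsSplit

/-- The vertices of `W` cannot leave `W` inside `F`, as both have the same attachment vertex. -/
theorem IsMinFullFragment.not_isFullFragment_component (hF : IsMinFullFragment G H b F z)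
    (hW : IsFragment G H b W z) (hfull : ¬ IsFullFragment G H b W z) (hWF : W ⊆ F) :
    ¬ IsFullFragment G H b {y | ReachableIn G F x y} z := by
  intro hcomp
  have heq := hF.2 _ _ hcomp fun v hv => hv.right
  obtain ⟨v, hv, hvW⟩ : ∃ v ∈ F, v ∉ W := by
    by_contra! hFW
    exact hfull ⟨hW, fun Y c hY => (hF.1.2 Y c hY).trans hFW⟩
  obtain ⟨w, hw⟩ := hW.nonempty
  have hxv : ReachableIn G F x v := heq.ge hv
  have hxw : ReachableIn G F x w := heq.ge (hWF hw)
  obtain ⟨p, hp, q, hq, hpq⟩ := (hxw.symm.trans hxv).exists_adj_exit_mem hw hvW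
  obtain rfl := (hW.mem_or_eq p hp.2 q (hF.1.1.subset hq.1) hpq).resolve_left hq.2
  exact hF.1.1.attach_notMem hq.1

namespace IsSplit

theorem exists_isFullFragment_not_adj (h : IsSplit G S a b A B) (h' : IsSplit G S b a B A)
    (hC : IsCritical G S a b β) (hA : ∀ X, ¬ IsMinFragment G A a X a)
    (hB : ∀ Y, ¬ IsMinFragment G B b Y b) :
    ∃ F r, IsFullFragment G A a F r ∧ r ≠ a ∧ ∀ x ∈ F, ¬ G.Adj x b := by
  have hfin := h'.finite_right hC.symm
  obtain ⟨F, r, hF⟩ := h'.exists_isMinFullFragment hC.symm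
  obtain ⟨X, c, hX⟩ := h'.exists_isMinFragment hC.symm
  have hXfull : ¬ IsFullFragment G A a X c := fun hfull =>
    h.false_of_unique_isMinFragment h' hC hA hB hX fun X' c' hX' =>
      hX.2 _ _ hX'.1 (hfull.2 _ _ hX')
  obtain ⟨W, z, -, hW⟩ := hX.1.exists_isMaxNonfullFragment hXfull hfin
  obtain rfl := h.attach_eq_of_isMaxNonfullFragment h' hC hA hB hW hF
  have hza := h'.attach_ne_root hW.toIsFragment hW.not_isFullFragment
  refine ⟨F, z, hF.1, hza, fun x hx hxb => ?_⟩
  obtain ⟨W₁, z₁, hsub, hW₁⟩ := (hF.1.1.component hx).exists_isMaxNonfullFragment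
    (hF.not_isFullFragment_component hW.toIsFragment hW.not_isFullFragment
      (h'.subset_isFullFragment hC.symm hF.1 hW.toIsFragment hza)) hfin
  obtain ⟨Y, d, hY, hxY, -⟩ :=
    h.exists_isMinFragment_union_mem h' hC hA hW₁ (hsub (ReachableIn.refl hx))
  rcases hY.1.mem_or_eq x hxY b (Or.inl h.right_mem) hxb with hbY | hbd
  · exact hY.1.root_notMem hbY
  · exact h.attach_ne_root_of_union_fragment h' hC hA hW₁.toIsFragment hW₁.not_isFullFragment hY
      hbd.symm

/-- Otherwise the full fragments `F` and `F'` of both sides have `r` and `t` as their only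
neighbours, which contradicts `ThreeLinked`. -/
theorem exists_isMinFragment_root_or (h : IsSplit G S a b A B) (h' : IsSplit G S b a B A)
    (hC : IsCritical G S a b β) :
    (∃ X, IsMinFragment G A a X a) ∨ ∃ Y, IsMinFragment G B b Y b := by
  by_contra! hroot
  obtain ⟨hA, hB⟩ := hroot
  obtain ⟨F, r, hF, hra, hFb⟩ := h.exists_isFullFragment_not_adj h' hC hA hB
  obtain ⟨F', t, hF', -, hFa⟩ := h'.exists_isFullFragment_not_adj h hC.symm hB hA
  have hAF := h'.subset_of_isFullFragment hC.symm hF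
  have hBF := h.subset_of_isFullFragment hC hF'
  have hFA := hF.1.subset
  have hFB := hF'.1.subset
  have hr := hF.1.attach_mem
  obtain ⟨u, hu, v, ⟨hvS, hv⟩, huv, hvr, hvt⟩ := hC.threeLinked (F ∪ F')
    (Set.union_subset (hFA.trans h.left_subset) (hFB.trans h.right_subset))
    (hF.1.nonempty.mono Set.subset_union_left)
    (fun ha => ha.elim hF.1.root_notMem fun ha => h.left_notMem_right (hFB ha))
    (fun hb => hb.elim (fun hb => h.right_notMem_left (hFA hb)) hF'.1.root_notMem)
    ⟨r, ⟨h.left_subset hr, fun hr' => hr'.elim hF.1.attach_notMem fun hr' =>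
      h.notMem_right hr (hFB hr')⟩, hra, fun e => h.notMem_right hr (e ▸ h.right_mem)⟩ r t
  rw [← h.union_eq] at hvS
  rcases hu with hu | hu <;> rcases hvS with hvS | hvS
  · exact (hF.1.mem_or_eq u hu v hvS huv).elim (fun h => hv (Or.inl h)) hvr
  · grind [hBF hvS, hFb u hu]
  · grind [hAF hvS, hFa u hu]
  · exact (hF'.1.mem_or_eq u hu v hvS huv).elim (fun h => hv (Or.inr h)) hvt

theorem exists_isMinFragment_root_and (h : IsSplit G S a b A B) (h' : IsSplit G S b a B A)
    (hC : IsCritical G S a b β) :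
    (∃ X, IsMinFragment G A a X a) ∧ ∃ Y, IsMinFragment G B b Y b := by
  rcases h.exists_isMinFragment_root_or h' hC with hA | hB
  · exact ⟨hA, h.exists_isMinFragment_root h' hC hA⟩
  · exact ⟨h'.exists_isMinFragment_root h hC.symm hB, hB⟩

end IsSplit

end TightSides

/-! ### Reduction to three-linked sets -/

section Reduction

variable {V : Type*} {G : SimpleGraph V} {S X : Set V} {a b p q : V} {β γ : V → V → ℕ}

namespace Linked

theorem reachableIn_of_exists_ne (h : Linked G S a b) (hne : ∃ w ∈ S, w ≠ a ∧ w ≠ b) :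
    ReachableIn G S a b := by
  obtain ⟨w, hw, hwa, hwb⟩ := hne
  have hb : ReachableIn G (S \ {a}) w b :=
    (h.reachableIn a w hw hwa).resolve_left fun hr => hr.right.2 rfl
  have ha : ReachableIn G (S \ {b}) w a :=
    (h.reachableIn b w hw hwb).resolve_right fun hr => hr.right.2 rfl
  exact (ha.mono Set.sdiff_subset).symm.trans (hb.mono Set.sdiff_subset)

theorem exists_reachableIn (h : Linked G S a b) (ha : a ∉ X) (hb : b ∉ X) {v z : V} (hz : z ∈ S)
    (hzv : z ≠ v) : ∃ w ∉ X, (w = a ∨ w = b) ∧ ReachableIn G (S \ {v}) z w :=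
  (h.reachableIn v z hz hzv).elim (fun hr => ⟨a, ha, .inl rfl, hr⟩) fun hr => ⟨b, hb, .inr rfl, hr⟩

theorem exists_adj (h : Linked G S a b) (hX : X ⊆ S) (hne : X.Nonempty) (ha : a ∉ X) (hb : b ∉ X)
    (p : V) : ∃ u ∈ X, ∃ v ∈ S \ X, G.Adj u v ∧ v ≠ p := by
  obtain ⟨z, hz, s, hzs, hps⟩ : ∃ z ∈ X, ∃ s, z ≠ s ∧ (p ∉ X → s = p) := by
    by_cases hp : p ∈ X
    · exact ⟨p, hp, a, fun e => ha (e ▸ hp), fun h => absurd hp h⟩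
    · exact hne.elim fun z hz => ⟨z, hz, p, fun e => hp (e ▸ hz), fun _ => rfl⟩
  obtain ⟨w, hw, -, hr⟩ := h.exists_reachableIn ha hb (hX hz) hzs
  obtain ⟨u, hu, v, hv, huv⟩ := hr.exists_adj_exit_mem hz hw
  exact ⟨u, hu.2, v, ⟨hv.1.1, hv.2⟩, huv, fun e => hv.1.2 (e.trans (hps (e ▸ hv.2)).symm)⟩

theorem union_pair (h : Linked G S a b) (hX : X ⊆ S) (ha : a ∉ X) (hb : b ∉ X) (hpq : p ≠ q)
    (hN : ∀ u ∈ X, ∀ v ∈ S \ X, G.Adj u v → v = p ∨ v = q) : Linked G (X ∪ {p, q}) p q := by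
  refine ⟨by simp, by simp, hpq, ?_⟩
  rintro v z (hz | rfl | rfl) hzv
  · obtain ⟨w, hw, -, hr⟩ := h.exists_reachableIn ha hb (hX hz) hzv
    obtain ⟨u, y, hzu, hyS, hyX, huy⟩ := hr.exists_adj_exit hz hw
    have hzy (hy : y ∈ X ∪ {p, q}) : ReachableIn G ((X ∪ {p, q}) \ {v}) z y :=
      (hzu.mono (by grind)).snoc huy ⟨hy, hyS.2⟩
    rcases hN u hzu.right.2 y ⟨hyS.1, hyX⟩ huy with rfl | rfl
    · exact .inl (hzy (by simp))
    · exact .inr (hzy (by simp))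
  · exact .inl (.refl ⟨by simp, hzv⟩)
  · exact .inr (.refl ⟨by simp, hzv⟩)

theorem exists_disjoint_reachableIn (h : Linked G S a b) (hX : X ⊆ S) (hne : X.Nonempty)
    (ha : a ∉ X) (hb : b ∉ X) (hpq : p ≠ q)
    (hN : ∀ u ∈ X, ∀ v ∈ S \ X, G.Adj u v → v = p ∨ v = q) :
    ∃ M₁ ⊆ S \ X, ∃ M₂ ⊆ S \ X, Disjoint M₁ M₂ ∧
      (ReachableIn G M₁ p a ∧ ReachableIn G M₂ q b ∨
        ReachableIn G M₁ p b ∧ ReachableIn G M₂ q a) := by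
  have hsep (s : V) : ∃ x, (x = p ∨ x = q) ∧
      ∃ y ∈ ({a, b} : Set V), ReachableIn G ((S \ X) \ {s}) x y := by
    obtain ⟨z, hz⟩ := hne
    obtain ⟨t, hzt, hst⟩ : ∃ t, z ≠ t ∧ (s ∉ X → t = s) := by
      by_cases hs : s ∈ X
      · exact ⟨a, fun e => ha (e ▸ hz), fun h => absurd hs h⟩
      · exact ⟨s, fun e => hs (e ▸ hz), fun _ => rfl⟩
    obtain ⟨w, hw, hwab, hr⟩ := h.exists_reachableIn ha hb (hX hz) hzt
    obtain ⟨u, v, hwu, -, hv, huv⟩ := hr.symm.exists_adj_exit (X := Xᶜ) hw (by simpa)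
    exact ⟨u, hN v (by simpa using hv) u ⟨hwu.right.1.1, hwu.right.2⟩ huv.symm, w, hwab,
      hwu.symm.mono (by grind)⟩
  obtain ⟨M₁, hM₁, M₂, hM₂, hd, ⟨y₁, hy₁, h₁⟩, y₂, hy₂, h₂⟩ :=
    GridPath.exists_disjoint_reachableIn hpq hsep
  refine ⟨M₁, hM₁, M₂, hM₂, hd, ?_⟩
  have hy : y₁ ≠ y₂ := fun e => Set.disjoint_left.1 hd h₁.right (e ▸ h₂.right)
  rcases hy₁ with rfl | rfl <;> rcases hy₂ with rfl | rfl
  exacts [absurd rfl hy, .inl ⟨h₁, h₂⟩, .inr ⟨h₁, h₂⟩, absurd rfl hy]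

end Linked

theorem HasPathIn.exists_extension {M₁ M₂ : Set V} {k : ℕ}
    (hpq : HasPathIn G (X ∪ {p, q}) p q k) (h₁ : ReachableIn G M₁ p a) (h₂ : ReachableIn G M₂ q b)
    (hM₁ : M₁ ⊆ S \ X) (hM₂ : M₂ ⊆ S \ X) (hd : Disjoint M₁ M₂) (hX : X ⊆ S) :
    ∃ l₁ l₂, HasPathIn G S a p l₁ ∧ HasPathIn G S q b l₂ ∧ HasPathIn G S a b (l₁ + k + l₂) := by
  obtain ⟨l₁, p₁⟩ := h₁.exists_hasPathIn
  obtain ⟨l₂, p₂⟩ := h₂.exists_hasPathIn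
  have hp := h₁.left
  have hq := h₂.left
  have hM₁S := hM₁.trans Set.sdiff_subset
  have hM₂S := hM₂.trans Set.sdiff_subset
  have hXS : X ∪ {p, q} ⊆ S := Set.union_subset hX (Set.pair_subset (hM₁S hp) (hM₂S hq))
  rw [Set.disjoint_left] at hd
  refine ⟨l₁, l₂, p₁.symm.mono hM₁S, p₂.mono hM₂S,
    ((p₁.symm.append hpq ?_).append p₂ ?_).mono
      (Set.union_subset (Set.union_subset hM₁S hXS) hM₂S)⟩
  · grind
  · grind

/-- What an induction over linked sets provides at `S`, `a`, `b`. Paths of length `γ` exist in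
smaller sets whose inner vertices keep all their neighbours (induction on the size of the set),
paths of length `β` exist in sets whose inner vertices lose at most one neighbour (induction on the
degree), and the remaining fields are the arithmetic of gluing such paths. -/
structure IsInductionStep (G : SimpleGraph V) (S : Set V) (a b : V) (γ β : V → V → ℕ) : Prop where
  finite : S.Finite
  linked : Linked G S a b
  exists_ne : ∃ w ∈ S, w ≠ a ∧ w ≠ b
  goal_comm : ∀ x y, γ x y = γ y x
  hasLongPathIn_goal : ∀ W ⊆ S, W.ncard < S.ncard → ∀ p q, Linked G W p q →
    (∃ w ∈ W, w ≠ p ∧ w ≠ q) →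
    (∀ w ∈ W, w ≠ p → w ≠ q → w ≠ a ∧ w ≠ b ∧ ∀ v ∈ S, G.Adj w v → v ∈ W) →
    HasLongPathIn G W p q (γ p q)
  goal_le_of_one : ∀ p q l₀ k l₁, HasPathIn G S a p l₀ → HasPathIn G S q b l₁ → γ p q ≤ k →
    γ a b ≤ l₀ + k + l₁
  goal_le_two : ∀ p ∈ S, p ≠ a → p ≠ b → G.Adj a p → G.Adj p b →
    (∀ v ∈ S, G.Adj p v → v = a ∨ v = b) → γ a b ≤ 2
  hasLongPathIn : ∀ W ⊆ S, ∀ x y, Linked G W x y → (∃ w ∈ W, w ≠ x ∧ w ≠ y) →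
    (∀ w ∈ W, w ≠ x → w ≠ y → w ≠ a ∧ w ≠ b ∧
      ∀ v ∈ S \ W, ∀ v' ∈ S \ W, G.Adj w v → G.Adj w v' → v = v') →
    HasLongPathIn G W x y (β x y)
  bound_le_one : ∀ u ∈ S, u ≠ a → u ≠ b → ∀ c p, G.Adj u c →
    (∀ v ∈ S, G.Adj u v → v = c ∨ v = p) → β c u ≤ 1
  bound_comm : ∀ x y, β x y = β y x
  goal_le_of_two : ∀ x₁ y₁ x₂ y₂ l₀ k₁ l₁ k₂ l₂,
    HasPathIn G S a x₁ l₀ → HasPathIn G S y₁ x₂ l₁ → HasPathIn G S y₂ b l₂ →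
    β x₁ y₁ ≤ k₁ → β x₂ y₂ ≤ k₂ → ((1 ≤ l₁ ∧ 2 ≤ l₀ + l₁ + l₂) ∨ 2 ≤ l₀ ∨ 2 ≤ l₂) →
    γ a b ≤ l₀ + k₁ + l₁ + k₂ + l₂

namespace IsInductionStep

theorem hasLongPathIn_union_pair (h : IsInductionStep G S a b γ β) (hX : X ⊆ S) (hne : X.Nonempty)
    (ha : a ∉ X) (hb : b ∉ X) (he : ∃ e ∈ S \ X, e ≠ a ∧ e ≠ b) (hp : p ∈ S \ X) (hq : q ∈ S \ X)
    (hpq : p ≠ q) (hN : ∀ u ∈ X, ∀ v ∈ S \ X, G.Adj u v → v = p ∨ v = q) :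
    HasLongPathIn G (X ∪ {p, q}) p q (γ p q) := by
  have hsub : X ∪ {p, q} ⊆ S := Set.union_subset hX (Set.pair_subset hp.1 hq.1)
  refine h.hasLongPathIn_goal _ hsub
    (Set.ncard_lt_ncard (hsub.ssubset_of_ne fun heq => ?_) h.finite) p q
    (h.linked.union_pair hX ha hb hpq hN) ?_ ?_
  · obtain ⟨e, he, hea, heb⟩ := he
    have h_ab := h.linked.ne
    have h_a : a ∈ X ∪ {p, q} := heq ▸ h.linked.left_mem
    have h_b : b ∈ X ∪ {p, q} := heq ▸ h.linked.right_mem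
    have h_e : e ∈ X ∪ {p, q} := heq ▸ he.1
    grind
  · obtain ⟨x, hx⟩ := hne
    exact ⟨x, .inl hx, by grind, by grind⟩
  · intro w hw hwp hwq
    have hwX : w ∈ X := by grind
    exact ⟨by grind, by grind, fun v hv hwv => by grind⟩

/-- If only `p` and `q` were neighbours of `X`, a long `p`–`q` path through `X` would extend by two
disjoint paths from `{p, q}` to `{a, b}`. -/
theorem threeLinked (h : IsInductionStep G S a b γ β) (hno : ¬ HasLongPathIn G S a b (γ a b)) :
    ThreeLinked G S a b := by
  intro X hX hne ha hb he p q
  by_contra! hcon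
  have hN (u) (hu : u ∈ X) (v) (hv : v ∈ S \ X) (huv : G.Adj u v) : v = p ∨ v = q :=
    or_iff_not_imp_left.2 (hcon u hu v hv huv)
  obtain ⟨hp, hpq⟩ : p ∈ S \ X ∧ p ≠ q := by
    obtain ⟨u, hu, v, hv, huv, hvq⟩ := h.linked.exists_adj hX hne ha hb q
    obtain rfl := (hN u hu v hv huv).resolve_right hvq
    exact ⟨hv, hvq⟩
  have hq : q ∈ S \ X := by
    obtain ⟨u, hu, v, hv, huv, hvp⟩ := h.linked.exists_adj hX hne ha hb p
    exact (hN u hu v hv huv).resolve_left hvp ▸ hv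
  obtain ⟨k, hk, pathX⟩ := h.hasLongPathIn_union_pair hX hne ha hb he hp hq hpq hN
  obtain ⟨M₁, hM₁, M₂, hM₂, hd, ⟨h₁, h₂⟩ | ⟨h₁, h₂⟩⟩ :=
    h.linked.exists_disjoint_reachableIn hX hne ha hb hpq hN
  · obtain ⟨l₁, l₂, path₁, path₂, path_ab⟩ :=
      pathX.exists_extension h₁ h₂ hM₁ hM₂ hd hX
    exact hno ⟨_, h.goal_le_of_one p q l₁ k l₂ path₁ path₂ hk, path_ab⟩
  · obtain ⟨l₁, l₂, path₁, path₂, path_ab⟩ :=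
      (Set.pair_comm p q ▸ pathX.symm).exists_extension h₂ h₁ hM₂ hM₁ hd.symm hX
    exact hno ⟨_, h.goal_le_of_one q p l₁ k l₂ path₁ path₂ (h.goal_comm p q ▸ hk), path_ab⟩

end IsInductionStep

end Reduction

/-! ### Splits from matching cuts -/

section MatchingCuts

variable {V : Type*} {G : SimpleGraph V} {S S₀ A₀ B₀ P : Set V} {a b a₁ b₁ : V}

/-- The edges of `G` between `P` and its complement form a matching. -/
def IsMatchingCut (G : SimpleGraph V) (P : Set V) : Prop :=
  ∀ u v v', (u ∈ P ↔ v ∉ P) → (u ∈ P ↔ v' ∉ P) → G.Adj u v → G.Adj u v' → v = v'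

/-- Any two vertices of `G` are separated by a matching cut. -/
def HasMatchingCuts (G : SimpleGraph V) : Prop :=
  ∀ x y, x ≠ y → ∃ P : Set V, x ∈ P ∧ y ∉ P ∧ IsMatchingCut G P

theorem IsMatchingCut.compl (hP : IsMatchingCut G P) : IsMatchingCut G Pᶜ :=
  fun u v v' h h' => hP u v v' (by grind) (by grind)

namespace ThreeLinked

theorem connectedOn_sdiff_pair (h : ThreeLinked G S a b) : ConnectedOn G (S \ {a, b}) := by
  intro x hx y hy
  by_contra hcon
  obtain ⟨u, hu, v, hv, huv, hva, hvb⟩ := h {v | ReachableIn G (S \ {a, b}) x v}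
    (fun v hv => hv.right.1) ⟨x, .refl hx⟩ (fun ha => by simpa using ha.right.2)
    (fun hb => by simpa using hb.right.2) ⟨y, ⟨hy.1, hcon⟩, by grind, by grind⟩ a b
  exact hv.2 (hu.snoc huv ⟨hv.1, by simp [hva, hvb]⟩)

theorem exists_adj_left (h : ThreeLinked G S a b) (hS : (S \ {a, b}).Nontrivial) (p : V) :
    ∃ u ∈ S \ {a, b}, G.Adj a u ∧ u ≠ p := by
  have of_mem (p) (hp : p ∈ S \ {a, b}) : ∃ u ∈ S \ {a, b}, G.Adj a u ∧ u ≠ p := by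
    obtain ⟨x, hx, hxp⟩ := hS.exists_ne p
    obtain ⟨u, hu, v, hv, huv, hvp, hvb⟩ := h ((S \ {a, b}) \ {p}) (fun v hv => hv.1.1)
      ⟨x, hx, hxp⟩ (by simp) (by simp) ⟨p, by grind, by grind, by grind⟩ p b
    obtain rfl : v = a := by grind
    exact ⟨u, hu.1, huv.symm, hu.2⟩
  by_cases hp : p ∈ S \ {a, b}
  · exact of_mem p hp
  · obtain ⟨x, hx⟩ := hS.nonempty
    obtain ⟨u, hu, hau, -⟩ := of_mem x hx
    exact ⟨u, hu, hau, fun e => hp (e ▸ hu)⟩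

theorem exists_adj_left_mem (h : ThreeLinked G S a b) (hS : (S \ {a, b}).Nontrivial)
    (hP : IsMatchingCut G P) (ha : a ∈ P) : ∃ u ∈ S \ {a, b}, u ∈ P ∧ G.Adj a u := by
  by_contra! hcon
  obtain ⟨u, hu, hau, -⟩ := h.exists_adj_left hS a
  obtain ⟨v, hv, hav, hvu⟩ := h.exists_adj_left hS u
  exact hvu (hP a v u (by grind) (by grind) hav hau)

end ThreeLinked

theorem ConnectedOn.sdiff_component {K : Set V} (hS₀ : ConnectedOn G S₀) (hK : ConnectedOn G K)
    (hKS : K ⊆ S₀) (hne : K.Nonempty) :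
    ConnectedOn G (S₀ \ {v | ReachableIn G (S₀ \ K) b₁ v}) := by
  obtain ⟨k, hk⟩ := hne
  have hK' : K ⊆ S₀ \ {v | ReachableIn G (S₀ \ K) b₁ v} :=
    fun v hv => ⟨hKS hv, fun hr => hr.right.2 hv⟩
  have to_k (x) (hx : x ∈ S₀ \ {v | ReachableIn G (S₀ \ K) b₁ v}) :
      ReachableIn G (S₀ \ {v | ReachableIn G (S₀ \ K) b₁ v}) x k := by
    by_cases hxK : x ∈ K
    · exact (hK x hxK k hk).mono hK'
    obtain ⟨u, v, hxu, hvS, hv, huv⟩ :=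
      (hS₀ x hx.1 k (hKS hk)).exists_adj_exit (X := {v | ReachableIn G (S₀ \ K) x v})
        (.refl ⟨hx.1, hxK⟩) fun hr => hr.right.2 hk
    have hvK : v ∈ K := by
      by_contra hvK
      exact hv (hxu.right.2.snoc huv ⟨hvS, hvK⟩)
    have hxu' : ReachableIn G (S₀ \ {v | ReachableIn G (S₀ \ K) b₁ v}) x u :=
      hxu.mono fun w hw => ⟨hw.1, fun hr => hx.2 (hr.trans (ReachableIn.symm hw.2))⟩
    exact (hxu'.snoc huv (hK' hvK)).trans ((hK v hvK k hk).mono hK')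
  exact fun x hx y hy => (to_k x hx).trans (to_k y hy).symm

theorem ConnectedOn.exists_connectedOn_sdiff (hS₀ : ConnectedOn G S₀) (ha₁ : a₁ ∈ S₀ ∩ P)
    (hb₁ : b₁ ∈ S₀ \ P) :
    ∃ L ⊆ S₀, a₁ ∉ L ∧ b₁ ∈ L ∧ ConnectedOn G L ∧ ConnectedOn G (S₀ \ L) ∧
      ∀ u ∈ S₀ \ L, ∀ v ∈ L, G.Adj u v → u ∈ P ∧ v ∉ P := by
  set K : Set V := {v | ReachableIn G (S₀ ∩ P) a₁ v}
  have hKS : K ⊆ S₀ ∩ P := fun v hv => ReachableIn.right hv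
  have ha₁K : a₁ ∈ K := .refl ha₁
  refine ⟨{v | ReachableIn G (S₀ \ K) b₁ v}, fun v hv => hv.right.1, fun h => h.right.2 ha₁K,
    .refl ⟨hb₁.1, fun h => hb₁.2 (hKS h).2⟩, .connectedOn_setOf,
    hS₀.sdiff_component .connectedOn_setOf (fun v hv => (hKS hv).1) ⟨a₁, ha₁K⟩, ?_⟩
  intro u hu v hv huv
  have huK : u ∈ K := by
    by_contra huK
    exact hu.2 (hv.snoc huv.symm ⟨hu.1, huK⟩)
  exact ⟨(hKS huK).2, fun hvP => hv.right.2 (ReachableIn.snoc huK huv ⟨hv.right.1, hvP⟩)⟩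

theorem IsMatchingCut.isSplit (hP : IsMatchingCut G P) (haP : a ∈ P) (haS : a ∈ S) (hbS : b ∈ S)
    (hab : a ≠ b) (hunion : A₀ ∪ B₀ = S \ {a, b}) (hd : Disjoint A₀ B₀) (hA₀ : ConnectedOn G A₀)
    (hB₀ : ConnectedOn G B₀) (ha₁ : a₁ ∈ A₀) (haa₁ : G.Adj a a₁) (hb₁ : b₁ ∈ B₀)
    (hbb₁ : G.Adj b b₁) (hadj : ∀ u ∈ A₀, ∀ v ∈ B₀, G.Adj u v → u ∈ P ∧ v ∉ P) :
    IsSplit G S a b (A₀ ∪ {a}) (B₀ ∪ {b}) := by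
  have hmem (v) : v ∈ A₀ ∨ v ∈ B₀ ↔ v ∈ S ∧ v ≠ a ∧ v ≠ b := by
    rw [← Set.mem_union, hunion]
    simp
  rw [Set.disjoint_left] at hd
  exact
    { left_mem := by simp
      right_mem := by simp
      disjoint := Set.disjoint_left.2 fun v => by grind [hmem v]
      union_eq := Set.ext fun v => by grind [hmem v]
      connectedOn_left := hA₀.union_singleton ha₁ haa₁
      connectedOn_right := hB₀.union_singleton hb₁ hbb₁
      connectedOn_left_sdiff := by
        rwa [Set.union_sdiff_cancel_right fun v hv => by grind [hmem v]]
      connectedOn_right_sdiff := by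
        rwa [Set.union_sdiff_cancel_right fun v hv => by grind [hmem v]]
      exists_left_ne := ⟨a₁, .inl ha₁, haa₁.ne'⟩
      exists_right_ne := ⟨b₁, .inl hb₁, hbb₁.ne'⟩
      eq_of_adj := by
        intro v hv hvb u hu u' hu' hvu hvu'
        have hv : v ∈ B₀ := hv.resolve_right hvb
        have cross (u) (hu : u ∈ A₀ ∪ {a}) (hvu : G.Adj v u) : u = a ∨ u ∈ P ∧ v ∉ P :=
          hu.elim (fun hu => .inr (hadj u hu v hv hvu.symm)) .inl
        have := hP v u u'
        grind }

theorem HasMatchingCuts.exists_isSplit (hG : HasMatchingCuts G) (h : ThreeLinked G S a b)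
    (haS : a ∈ S) (hbS : b ∈ S) (hab : a ≠ b) (hS : (S \ {a, b}).Nontrivial) :
    ∃ A B, IsSplit G S a b A B ∧ IsSplit G S b a B A ∧
      ∃ u ∈ A, ∃ v ∈ B, u ≠ a ∧ v ≠ b ∧ G.Adj u v := by
  obtain ⟨P, haP, hbP, hP⟩ := hG a b hab
  obtain ⟨a₁, ha₁, ha₁P, haa₁⟩ := h.exists_adj_left_mem hS hP haP
  obtain ⟨b₁, hb₁, hb₁P, hbb₁⟩ :=
    h.symm.exists_adj_left_mem (Set.pair_comm a b ▸ hS) hP.compl hbP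
  rw [Set.pair_comm] at hb₁
  have hconn := h.connectedOn_sdiff_pair
  obtain ⟨L, hLS, ha₁L, hb₁L, hL, hSL, hadj⟩ :=
    hconn.exists_connectedOn_sdiff ⟨ha₁, ha₁P⟩ ⟨hb₁, hb₁P⟩
  refine ⟨_, _,
    hP.isSplit haP haS hbS hab (Set.sdiff_union_of_subset hLS) Set.disjoint_sdiff_left hSL hL
      ⟨ha₁, ha₁L⟩ haa₁ hb₁L hbb₁ hadj,
    hP.compl.isSplit hbP hbS haS hab.symm
      (by rw [Set.union_sdiff_cancel hLS, Set.pair_comm]) Set.disjoint_sdiff_right hL hSL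
      hb₁L hbb₁ ⟨ha₁, ha₁L⟩ haa₁ (by grind [G.adj_comm]), ?_⟩
  obtain ⟨u, hu, v, hv, huv⟩ := (hconn a₁ ha₁ b₁ hb₁).exists_adj_exit_mem
    (X := (S \ {a, b}) \ L) ⟨ha₁, ha₁L⟩ fun h => h.2 hb₁L
  exact ⟨u, .inl hu.2, v, by grind, by grind, by grind, huv⟩

end MatchingCuts

/-! ### Tight splits -/

section TightSplits

variable {V : Type*} {G : SimpleGraph V} {S A B : Set V} {a b u v : V} {β γ : V → V → ℕ}

/-- The split left over when no `a`–`b` path is assembled from two long paths: a two-sided split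
where no cut vertex of a side separates a vertex from the end vertex of that side, so that every
vertex is joined to the end vertex of its side by a path as long as `β` prescribes. -/
structure IsTightSplit (G : SimpleGraph V) (S : Set V) (a b : V) (β : V → V → ℕ) (A B : Set V) :
    Prop extends IsSplit G S a b A B where
  isSplit_symm : IsSplit G S b a B A
  exists_adj : ∃ u ∈ A, ∃ v ∈ B, u ≠ a ∧ v ≠ b ∧ G.Adj u v
  linked_left : ∀ u ∈ A, u ≠ a → Linked G A a u
  hasLongPathIn_left : ∀ u ∈ A, u ≠ a → HasLongPathIn G A a u (β a u)
  hasLongPathIn_right : ∀ v ∈ B, v ≠ b → HasLongPathIn G B b v (β b v)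

theorem IsSplit.linked_and_hasLongPathIn {D H Y : Set V} (h : IsSplit G S a b D H)
    (hC : IsCritical G S a b β) (hY : IsMinFragment G H b Y b) (hu : u ∈ H) (hub : u ≠ b) :
    Linked G H b u ∧ HasLongPathIn G H b u (β b u) := by
  have huY := h.sdiff_root_subset hY.1 ⟨hu, hub⟩
  have hYH : Y ∪ {b} = H := by
    have := h.sdiff_root_subset hY.1
    have := hY.1.subset
    have := h.right_mem
    grind
  exact hYH ▸ ⟨hY.linked huY, (h.isLongFragment hC hY).hasLongPathIn u huY⟩

theorem IsSplit.hasPathIn_of_adj (h : IsSplit G S a b A B) {k₁ k₂ : ℕ} (huv : G.Adj u v)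
    (pathA : HasPathIn G A a u k₁) (pathB : HasPathIn G B b v k₂) :
    HasPathIn G S a b (k₁ + 1 + k₂) := by
  have hu := pathA.reachableIn.right
  have hv := pathB.reachableIn.right
  have hd := Set.disjoint_left.1 h.disjoint
  have hS := h.union_eq
  refine ((pathA.append (.edge huv) ?_).append pathB.symm ?_).mono ?_ <;> grind

namespace IsInductionStep

theorem nontrivial (h : IsInductionStep G S a b γ β) (hno : ¬ HasLongPathIn G S a b (γ a b)) :
    (S \ {a, b}).Nontrivial := by
  obtain ⟨w, hw, hwa, hwb⟩ := h.exists_ne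
  by_contra hS
  rw [Set.not_nontrivial_iff] at hS
  have hcases (v) (hv : v ∈ S) : v = a ∨ v = b ∨ v = w := by
    by_contra! hv'
    exact hv'.2.2 (hS ⟨hv, by simp [hv'.1, hv'.2.1]⟩ ⟨hw, by simp [hwa, hwb]⟩)
  have hX : ({w} : Set V) ⊆ S := by simpa
  have adj_of_ne (c : V) : ∃ v ∈ S, G.Adj w v ∧ v ≠ w ∧ v ≠ c := by
    obtain ⟨u, rfl, v, hv, huv, hvc⟩ :=
      h.linked.exists_adj hX ⟨w, rfl⟩ hwa.symm hwb.symm c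
    exact ⟨v, hv.1, huv, hv.2, hvc⟩
  have hwb' : G.Adj w b := by grind [adj_of_ne a]
  have hwa' : G.Adj w a := by grind [adj_of_ne b]
  have hle : γ a b ≤ 2 := h.goal_le_two w hw hwa hwb hwa'.symm hwb' fun v hv hwv => by
    grind [hcases v hv, hwv.ne']
  have ha := h.linked.left_mem
  have hb := h.linked.right_mem
  have hab := h.linked.ne
  exact hno ⟨2, hle, ((HasPathIn.edge hwa'.symm).append (.edge hwb') (by grind)).mono (by grind)⟩

theorem isCritical (h : IsInductionStep G S a b γ β) (hno : ¬ HasLongPathIn G S a b (γ a b)) :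
    IsCritical G S a b β where
  finite := h.finite
  left_mem := h.linked.left_mem
  right_mem := h.linked.right_mem
  ne := h.linked.ne
  threeLinked := h.threeLinked hno
  hasLongPathIn := h.hasLongPathIn
  bound_le_one := h.bound_le_one
  bound_comm := h.bound_comm
  not_hasPathIn x₁ y₁ x₂ y₂ l₀ k₁ l₁ k₂ l₂ h₀ h₁ h₂ hk₁ hk₂ hl hpath :=
    hno ⟨_, h.goal_le_of_two x₁ y₁ x₂ y₂ l₀ k₁ l₁ k₂ l₂ h₀ h₁ h₂ hk₁ hk₂ hl, hpath⟩

theorem hasLongPathIn_or_exists_isTightSplit (h : IsInductionStep G S a b γ β)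
    (hG : HasMatchingCuts G) :
    HasLongPathIn G S a b (γ a b) ∨ ∃ A B, IsTightSplit G S a b β A B := by
  refine or_iff_not_imp_left.2 fun hno => ?_
  have hC := h.isCritical hno
  obtain ⟨A, B, hAB, hBA, hadj⟩ :=
    hG.exists_isSplit hC.threeLinked hC.left_mem hC.right_mem hC.ne (h.nontrivial hno)
  obtain ⟨⟨X, hX⟩, Y, hY⟩ := hAB.exists_isMinFragment_root_and hBA hC
  exact ⟨A, B, hAB, hBA, hadj,
    fun u hu hua => (hBA.linked_and_hasLongPathIn hC.symm hX hu hua).1,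
    fun u hu hua => (hBA.linked_and_hasLongPathIn hC.symm hX hu hua).2,
    fun v hv hvb => (hAB.linked_and_hasLongPathIn hC hY hv hvb).2⟩

end IsInductionStep

end TightSplits

/-! ### The induction on the degree -/

section Degrees

variable {V : Type*} {G : SimpleGraph V} {S W A B : Set V} {a b p q z : V}

/-- The number of neighbours of `z` in `S`. -/
noncomputable def degreeIn (G : SimpleGraph V) (S : Set V) (z : V) : ℕ :=
  {v | v ∈ S ∧ G.Adj z v}.ncard

theorem degreeIn_le_of_forall_adj (hW : W.Finite) (h : ∀ v ∈ S, G.Adj z v → v ∈ W) :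
    degreeIn G S z ≤ degreeIn G W z :=
  Set.ncard_le_ncard (fun v hv => ⟨h v hv.1 hv.2, hv.2⟩) (hW.subset fun _ hv => hv.1)

theorem degreeIn_le_add_one (hS : S.Finite) (hW : W ⊆ S)
    (h : ∀ v ∈ S \ W, ∀ v' ∈ S \ W, G.Adj z v → G.Adj z v' → v = v') :
    degreeIn G S z ≤ degreeIn G W z + 1 := by
  have hfin : {v | v ∈ S \ W ∧ G.Adj z v}.Finite := hS.subset fun _ hv => hv.1.1
  have hone : {v | v ∈ S \ W ∧ G.Adj z v}.ncard ≤ 1 :=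
    (Set.ncard_le_one hfin).2 fun v hv v' hv' => h v hv.1 v' hv'.1 hv.2 hv'.2
  calc degreeIn G S z
      ≤ ({v | v ∈ W ∧ G.Adj z v} ∪ {v | v ∈ S \ W ∧ G.Adj z v}).ncard :=
        Set.ncard_le_ncard (fun v hv => by grind) ((hS.subset fun _ hv => hW hv.1).union hfin)
    _ ≤ degreeIn G W z + {v | v ∈ S \ W ∧ G.Adj z v}.ncard := Set.ncard_union_le _ _
    _ ≤ degreeIn G W z + 1 := by gcongr

theorem degreeIn_le_two {c p : V} (h : ∀ v ∈ S, G.Adj z v → v = c ∨ v = p) :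
    degreeIn G S z ≤ 2 :=
  (Set.ncard_le_ncard (t := {c, p}) (fun v hv => h v hv.1 hv.2) (by simp)).trans
    (Set.ncard_insert_le c {p} |>.trans (by simp))

/-- The setting of the induction: `S` is finite, linked between `a` and `b`, has an inner vertex,
and each inner vertex `z` has at least `f z` neighbours in `S`. -/
structure IsDegreeLinked (G : SimpleGraph V) (S : Set V) (a b : V) (f : V → ℕ) : Prop where
  finite : S.Finite
  linked : Linked G S a b
  exists_ne : ∃ w ∈ S, w ≠ a ∧ w ≠ b
  le_degreeIn : ∀ z ∈ S, z ≠ a → z ≠ b → f z ≤ degreeIn G S z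

/-- `par` is a proper colouring of `G` with the colours `0` and `1`. -/
structure IsParity (G : SimpleGraph V) (par : V → ℕ) : Prop where
  add_eq_one : ∀ u v, G.Adj u v → par u + par v = 1
  le_one : ∀ u, par u ≤ 1

variable {par : V → ℕ} {d : ℕ}

theorem IsParity.normalize (hpar : IsParity G par) (a : V) :
    IsParity G fun x => if par x = par a then 0 else 1 where
  add_eq_one u v huv := by
    have := hpar.add_eq_one u v huv
    have := hpar.le_one a
    grind
  le_one u := by grind

theorem IsParity.length_add_mod_two (hpar : IsParity G par) {x y : V} {n : ℕ}
    (h : HasPathIn G S x y n) : (n + par x + par y) % 2 = 0 :=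
  Nat.even_iff.1 (h.even_length_add hpar.add_eq_one)

theorem IsParity.two_pow_le_of_hasPathIn (hpar : IsParity G par) {x₁ y₁ x₂ y₂ : V}
    {l₀ k₁ l₁ k₂ l₂ : ℕ} (h₀ : HasPathIn G S a x₁ l₀) (h₁ : HasPathIn G S y₁ x₂ l₁)
    (h₂ : HasPathIn G S y₂ b l₂)
    (hk₁ : 2 ^ d - par x₁ - par y₁ ≤ k₁) (hk₂ : 2 ^ d - par x₂ - par y₂ ≤ k₂)
    (hl : (1 ≤ l₁ ∧ 2 ≤ l₀ + l₁ + l₂) ∨ 2 ≤ l₀ ∨ 2 ≤ l₂) :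
    2 ^ (d + 1) - par a - par b ≤ l₀ + k₁ + l₁ + k₂ + l₂ := by
  have := hpar.length_add_mod_two h₀
  have := hpar.length_add_mod_two h₁
  have := hpar.length_add_mod_two h₂
  have := hpar.le_one a
  have := hpar.le_one b
  have := hpar.le_one x₁
  have := hpar.le_one x₂
  have := hpar.le_one y₁
  have := hpar.le_one y₂
  omega

theorem two_pow_le_one_add (hd : d ≤ 1) : 2 ^ d ≤ 1 + d := by interval_cases d <;> simp

namespace IsDegreeLinked

variable {f g : V → ℕ}

theorem exists_hasPathIn (h : IsDegreeLinked G S a b f) : ∃ n, 1 ≤ n ∧ HasPathIn G S a b n := by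
  obtain ⟨n, hn⟩ := (h.linked.reachableIn_of_exists_ne h.exists_ne).exists_hasPathIn
  exact ⟨n, hn.pos h.linked.ne, hn⟩

theorem restrict (h : IsDegreeLinked G S a b f) (hW : W ⊆ S) (hlink : Linked G W p q)
    (hne : ∃ w ∈ W, w ≠ p ∧ w ≠ q)
    (hclosed : ∀ w ∈ W, w ≠ p → w ≠ q → w ≠ a ∧ w ≠ b ∧ ∀ v ∈ S, G.Adj w v → v ∈ W) :
    IsDegreeLinked G W p q f where
  finite := h.finite.subset hW
  linked := hlink
  exists_ne := hne
  le_degreeIn z hz hzp hzq := by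
    obtain ⟨hza, hzb, hz'⟩ := hclosed z hz hzp hzq
    exact (h.le_degreeIn z (hW hz) hza hzb).trans
      (degreeIn_le_of_forall_adj (h.finite.subset hW) hz')

theorem restrict_of_lose_one (h : IsDegreeLinked G S a b f) (hfg : ∀ z, g z + 1 ≤ f z) (hW : W ⊆ S)
    (hlink : Linked G W p q) (hne : ∃ w ∈ W, w ≠ p ∧ w ≠ q)
    (hlose : ∀ w ∈ W, w ≠ p → w ≠ q → w ≠ a ∧ w ≠ b ∧
      ∀ v ∈ S \ W, ∀ v' ∈ S \ W, G.Adj w v → G.Adj w v' → v = v') :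
    IsDegreeLinked G W p q g where
  finite := h.finite.subset hW
  linked := hlink
  exists_ne := hne
  le_degreeIn z hz hzp hzq := by
    obtain ⟨hza, hzb, hz'⟩ := hlose z hz hzp hzq
    have := h.le_degreeIn z (hW hz) hza hzb
    have := degreeIn_le_add_one h.finite hW hz'
    grind [hfg z]

theorem isInductionStep_of_parity (hpar : IsParity G par)
    (h : IsDegreeLinked G S a b fun z => d + 1 + par z)
    (ih_degree : ∀ W p q, IsDegreeLinked G W p q (fun z => d + par z) →
      HasLongPathIn G W p q (2 ^ d - par p - par q))
    (ih_size : ∀ W, W.ncard < S.ncard → ∀ p q, IsDegreeLinked G W p q (fun z => d + 1 + par z) →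
      HasLongPathIn G W p q (2 ^ (d + 1) - par p - par q)) :
    IsInductionStep G S a b (fun x y => 2 ^ (d + 1) - par x - par y)
      (fun x y => 2 ^ d - par x - par y) := by
  have heven {x y n} : HasPathIn G S x y n → (n + par x + par y) % 2 = 0 :=
    hpar.length_add_mod_two
  have hpos : 1 ≤ 2 ^ d := Nat.one_le_two_pow
  have ha := hpar.le_one a
  have hb := hpar.le_one b
  have hadj := hpar.add_eq_one
  exact
    { finite := h.finite
      linked := h.linked
      exists_ne := h.exists_ne
      goal_comm x y := Nat.sub_right_comm ..
      hasLongPathIn_goal W hW hlt p q hlink hne hclosed :=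
        ih_size W hlt p q (h.restrict hW hlink hne hclosed)
      goal_le_of_one p q l₀ k l₁ h₀ h₁ hk := by
        have := heven h₀
        have := heven h₁
        have := hpar.le_one p
        have := hpar.le_one q
        omega
      goal_le_two p hp hpa hpb hap hpb' hN := by
        have := (h.le_degreeIn p hp hpa hpb).trans (degreeIn_le_two hN)
        have := two_pow_le_one_add (d := d) (by omega)
        have := hadj _ _ hap
        have := hadj _ _ hpb'
        omega
      hasLongPathIn W hW x y hlink hne hlose :=
        ih_degree W x y (h.restrict_of_lose_one (fun z => by omega) hW hlink hne hlose)
      bound_le_one u hu hua hub c p huc hN := by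
        have := (h.le_degreeIn u hu hua hub).trans (degreeIn_le_two hN)
        have := two_pow_le_one_add (d := d) (by omega)
        have := hadj _ _ huc
        omega
      bound_comm x y := Nat.sub_right_comm ..
      goal_le_of_two _ _ _ _ _ _ _ _ _ := hpar.two_pow_le_of_hasPathIn }

theorem hasLongPathIn_of_parity (hG : HasMatchingCuts G) (hpar : IsParity G par)
    (h : IsDegreeLinked G S a b fun z => d + par z) :
    HasLongPathIn G S a b (2 ^ d - par a - par b) := by
  induction d generalizing S a b with
  | zero =>
    obtain ⟨n, hn, hpath⟩ := h.exists_hasPathIn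
    exact ⟨n, by omega, hpath⟩
  | succ d ih_degree =>
    induction hn : S.ncard using Nat.strong_induction_on generalizing S a b with
    | _ n ih_size =>
    have step := h.isInductionStep_of_parity hpar (fun W p q => ih_degree)
      fun W hW p q hW' => ih_size _ (hn ▸ hW) hW' rfl
    rcases step.hasLongPathIn_or_exists_isTightSplit hG with hpath | ⟨A, B, hAB⟩
    · exact hpath
    obtain ⟨u, hu, v, hv, hua, hvb, huv⟩ := hAB.exists_adj
    obtain ⟨k₁, hk₁, path₁⟩ := hAB.hasLongPathIn_left u hu hua
    obtain ⟨k₂, hk₂, path₂⟩ := hAB.hasLongPathIn_right v hv hvb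
    refine ⟨_, ?_, hAB.hasPathIn_of_adj huv path₁ path₂⟩
    have := hpar.add_eq_one u v huv
    omega

end IsDegreeLinked

end Degrees

section DegreeInduction

variable {V : Type*} {G : SimpleGraph V} {S A B : Set V} {a b u : V} {β : V → V → ℕ}
  {par : V → ℕ} {d : ℕ}

namespace IsTightSplit

theorem exists_left_ne_of_parity_eq (h : IsTightSplit G S a b β A B) (hpar : IsParity G par)
    (hu : u ∈ A) (hua : u ≠ a) (heq : par u = par a) : ∃ w ∈ A, w ≠ a ∧ w ≠ u := by
  obtain ⟨x, ⟨-, rfl⟩, w, hw, hxw⟩ :=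
    (h.connectedOn_left a h.left_mem u hu).exists_adj_exit_mem (X := {a}) rfl hua
  refine ⟨w, hw.1, hw.2, ?_⟩
  rintro rfl
  have := hpar.add_eq_one _ _ hxw
  omega

/-- Only vertices of the colour of `a` lose a neighbour when `S` is restricted to `A`. -/
theorem isDegreeLinked_left (h : IsTightSplit G S a b β A B) (hpar : IsParity G par)
    (hS : IsDegreeLinked G S a b fun _ => d + 1) (hab : par a ≠ par b)
    (hcross : ∀ u ∈ A, ∀ v ∈ B, u ≠ a → v ≠ b → G.Adj u v → par u = par a) (hu : u ∈ A)
    (hua : u ≠ a) (heq : par u = par a) :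
    IsDegreeLinked G A a u fun z => d + if par z = par a then 0 else 1 where
  finite := hS.finite.subset (h.union_eq ▸ Set.subset_union_left)
  linked := h.linked_left u hu hua
  exists_ne := h.exists_left_ne_of_parity_eq hpar hu hua heq
  le_degreeIn z hz hza _ := by
    have hAS : A ⊆ S := h.union_eq ▸ Set.subset_union_left
    have hB {v} (hv : v ∈ S \ A) : v ∈ B := (h.union_eq ▸ hv.1 : v ∈ A ∪ B).resolve_left hv.2
    have hzb : z ≠ b := fun e => Set.disjoint_left.1 h.disjoint hz (e ▸ h.right_mem)
    have hd : d + 1 ≤ degreeIn G S z := hS.le_degreeIn z (hAS hz) hza hzb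
    split_ifs with hza'
    · have := degreeIn_le_add_one hS.finite hAS fun v hv v' hv' =>
        h.isSplit_symm.eq_of_adj z hz hza v (hB hv) v' (hB hv')
      omega
    · refine hd.trans (degreeIn_le_of_forall_adj (hS.finite.subset hAS) fun v hv hzv => ?_)
      by_contra hvA
      have hvb : v = b := by
        by_contra hvb
        exact hza' (hcross z hz v (hB ⟨hv, hvA⟩) hza hvb hzv)
      have := hpar.add_eq_one z b (hvb ▸ hzv)
      have := hpar.le_one a
      omega

theorem hasLongPathIn (h : IsTightSplit G S a b (fun _ _ => 2 ^ d - 2) A B)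
    (hG : HasMatchingCuts G) (hpar : IsParity G par) (hd : d ≠ 0)
    (hS : IsDegreeLinked G S a b fun _ => d + 1) : HasLongPathIn G S a b (2 ^ (d + 1) - 2) := by
  have hpow : 2 ^ d % 2 = 0 := Nat.even_iff.1 (Nat.even_pow.2 ⟨even_two, hd⟩)
  obtain ⟨u, hu, v, hv, hua, hvb, huv⟩ := h.exists_adj
  obtain ⟨k₁, hk₁, path₁⟩ := h.hasLongPathIn_left u hu hua
  obtain ⟨k₂, hk₂, path₂⟩ := h.hasLongPathIn_right v hv hvb
  by_cases hab : par a = par b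
  · have path := h.hasPathIn_of_adj huv path₁ path₂
    have := hpar.length_add_mod_two path
    exact ⟨_, by omega, path⟩
  by_cases hcross : ∀ u ∈ A, ∀ v ∈ B, u ≠ a → v ≠ b → G.Adj u v → par u = par a
  · have heq := hcross u hu v hv hua hvb huv
    obtain ⟨k₁, hk₁, path₁⟩ := (h.isDegreeLinked_left hpar hS hab hcross hu hua heq)
      |>.hasLongPathIn_of_parity hG (hpar.normalize a)
    rw [if_pos rfl, if_pos heq] at hk₁
    exact ⟨_, by omega, h.hasPathIn_of_adj huv path₁ path₂⟩
  · push Not at hcross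
    obtain ⟨u, hu, v, hv, hua, hvb, huv, hne⟩ := hcross
    obtain ⟨k₁, hk₁, path₁⟩ := h.hasLongPathIn_left u hu hua
    obtain ⟨k₂, hk₂, path₂⟩ := h.hasLongPathIn_right v hv hvb
    have := hpar.length_add_mod_two path₁
    have := hpar.le_one a
    have := hpar.le_one u
    refine ⟨_, ?_, h.hasPathIn_of_adj huv path₁ path₂⟩
    omega

end IsTightSplit

namespace IsDegreeLinked

theorem isInductionStep (hd : d ≠ 0) (h : IsDegreeLinked G S a b fun _ => d + 1)
    (ih_degree : ∀ W p q, IsDegreeLinked G W p q (fun _ => d) →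
      HasLongPathIn G W p q (2 ^ d - 2))
    (ih_size : ∀ W, W.ncard < S.ncard → ∀ p q, IsDegreeLinked G W p q (fun _ => d + 1) →
      HasLongPathIn G W p q (2 ^ (d + 1) - 2)) :
    IsInductionStep G S a b (fun _ _ => 2 ^ (d + 1) - 2) (fun _ _ => 2 ^ d - 2) where
  finite := h.finite
  linked := h.linked
  exists_ne := h.exists_ne
  goal_comm _ _ := rfl
  hasLongPathIn_goal W hW hlt p q hlink hne hclosed :=
    ih_size W hlt p q (h.restrict hW hlink hne hclosed)
  goal_le_of_one p q l₀ k l₁ _ _ hk := by omega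
  goal_le_two p hp hpa hpb _ _ hN := by
    have : d + 1 ≤ 2 := (h.le_degreeIn p hp hpa hpb).trans (degreeIn_le_two hN)
    have := two_pow_le_one_add (d := d) (by omega)
    omega
  hasLongPathIn W hW x y hlink hne hlose :=
    ih_degree W x y (h.restrict_of_lose_one (fun _ => le_rfl) hW hlink hne hlose)
  bound_le_one u hu hua hub c p _ hN := by
    have : d + 1 ≤ 2 := (h.le_degreeIn u hu hua hub).trans (degreeIn_le_two hN)
    have := two_pow_le_one_add (d := d) (by omega)
    omega
  bound_comm _ _ := rfl
  goal_le_of_two x₁ y₁ x₂ y₂ l₀ k₁ l₁ k₂ l₂ _ _ _ hk₁ hk₂ hl := by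
    have : 2 ≤ 2 ^ d := Nat.le_self_pow hd 2
    omega

theorem hasLongPathIn (hG : HasMatchingCuts G) (hpar : IsParity G par)
    (h : IsDegreeLinked G S a b fun _ => d) : HasLongPathIn G S a b (2 ^ d - 2) := by
  induction d generalizing S a b with
  | zero =>
    obtain ⟨n, -, hpath⟩ := h.exists_hasPathIn
    exact ⟨n, by simp, hpath⟩
  | succ d ih_degree =>
    rcases eq_or_ne d 0 with rfl | hd
    · obtain ⟨n, -, hpath⟩ := h.exists_hasPathIn
      exact ⟨n, by simp, hpath⟩
    induction hn : S.ncard using Nat.strong_induction_on generalizing S a b with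
    | _ n ih_size =>
    have step := h.isInductionStep hd (fun W p q => ih_degree)
      fun W hW p q hW' => ih_size _ (hn ▸ hW) hW' rfl
    rcases step.hasLongPathIn_or_exists_isTightSplit hG with hpath | ⟨A, B, hAB⟩
    · exact hpath
    · exact hAB.hasLongPathIn hG hpar hd h

end IsDegreeLinked

end DegreeInduction

/-! ### Two-connected graphs -/

section TwoConnected

variable {V : Type*} {G : SimpleGraph V} {a b x y : V}

theorem reachableIn_verts (K : G.Subgraph) {x y : K.verts} (p : K.coe.Walk x y) :
    ReachableIn G K.verts x y := by
  induction p with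
  | nil => exact .refl (Subtype.prop _)
  | cons huv _ ih => exact .cons (K.adj_sub huv) (Subtype.prop _) ih

theorem reachableIn_compl_singleton_of_twoConnected (h : TwoConnected G) {v : V} (hx : x ≠ v)
    (hy : y ≠ v) : ReachableIn G {v}ᶜ x y := by
  obtain ⟨p⟩ := (h.2 v).preconnected ⟨x, by simpa using hx⟩ ⟨y, by simpa using hy⟩
  exact (reachableIn_verts _ p).mono fun w hw => by simpa using hw

theorem linked_univ_of_twoConnected (h : TwoConnected G) (hab : a ≠ b) :
    Linked G Set.univ a b where
  left_mem := trivial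
  right_mem := trivial
  ne := hab
  reachableIn v z _ hzv := by
    have hz (w) (hw : w ≠ v) : ReachableIn G (Set.univ \ {v}) z w :=
      (reachableIn_compl_singleton_of_twoConnected h hzv hw).mono fun _ hq => ⟨trivial, hq⟩
    rcases eq_or_ne a v with rfl | hav
    · exact .inr (hz b hab.symm)
    · exact .inl (hz a hav)

theorem exists_ne_of_twoConnected (h : TwoConnected G) (a b : V) : ∃ w, w ≠ a ∧ w ≠ b := by
  obtain ⟨x, y, z, hxy, hxz, hyz⟩ := h.1
  by_contra! hcon
  have hmem (w : V) : w = a ∨ w = b := or_iff_not_imp_left.2 (hcon w)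
  rcases hmem x <;> rcases hmem y <;> rcases hmem z <;> simp_all

theorem exists_reachableIn_adj_of_twoConnected (h : TwoConnected G) {s w : V} (hsx : s ≠ x)
    (hws : w ≠ s) (hwx : w ≠ x) : ∃ y, G.Adj y x ∧ ReachableIn G ({x}ᶜ \ {s}) w y := by
  obtain ⟨y, v, hwy, -, hv, hyv⟩ := (reachableIn_compl_singleton_of_twoConnected h hws
    hsx.symm).exists_adj_exit (X := {x}ᶜ) hwx (by simp)
  obtain rfl : v = x := by simpa using hv
  exact ⟨y, hyv, hwy.mono fun _ hu => ⟨hu.2, hu.1⟩⟩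

theorem exists_hasPathIn_through_of_twoConnected (h : TwoConnected G) (hab : a ≠ b) (hxa : x ≠ a)
    (hxb : x ≠ b) :
    ∃ l₁ l₂, HasPathIn G Set.univ a x l₁ ∧ HasPathIn G Set.univ a b (l₁ + l₂) := by
  have hsep (s : V) : ∃ w, (w = a ∨ w = b) ∧
      ∃ y ∈ {y | G.Adj y x}, ReachableIn G ({x}ᶜ \ {s}) w y := by
    obtain ⟨w, t, hw, hwt, htx, hst⟩ :
        ∃ w t, (w = a ∨ w = b) ∧ w ≠ t ∧ t ≠ x ∧ (s ≠ x → t = s) := by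
      rcases eq_or_ne s x with rfl | hsx
      · exact ⟨a, b, .inl rfl, hab, hxb.symm, fun hs => absurd rfl hs⟩
      · rcases eq_or_ne a s with rfl | has
        · exact ⟨b, a, .inr rfl, hab.symm, hsx, fun _ => rfl⟩
        · exact ⟨a, s, .inl rfl, has, hsx, fun _ => rfl⟩
    obtain ⟨y, hy, hwy⟩ := exists_reachableIn_adj_of_twoConnected h htx hwt (by grind)
    exact ⟨w, hw, y, hy, hwy.mono (by grind)⟩
  obtain ⟨M₁, hM₁, M₂, hM₂, hd, ⟨y₁, hy₁, h₁⟩, y₂, hy₂, h₂⟩ := exists_disjoint_reachableIn hab hsep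
  obtain ⟨k₁, path₁⟩ := h₁.exists_hasPathIn
  obtain ⟨k₂, path₂⟩ := h₂.exists_hasPathIn
  have hxM₁ : x ∉ M₁ := fun hx => hM₁ hx rfl
  have hxM₂ : x ∉ M₂ := fun hx => hM₂ hx rfl
  have hy₁M := h₁.right
  have hy₂M := h₂.right
  rw [Set.disjoint_left] at hd
  have path_ax := path₁.append (.edge hy₁) (by grind)
  have path_bx := path₂.append (.edge hy₂) (by grind)
  exact ⟨k₁ + 1, k₂ + 1, path_ax.mono (Set.subset_univ _),
    (path_ax.append path_bx.symm (by grind)).mono (Set.subset_univ _)⟩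

theorem hasLongPathIn_univ_of_twoConnected [Finite V] (h : TwoConnected G)
    (hG : HasMatchingCuts G) {par : V → ℕ} (hpar : IsParity G par) (hab : a ≠ b) {d : ℕ}
    (hdeg : ∀ z, z ≠ a → z ≠ b → d ≤ (G.neighborSet z).ncard) :
    HasLongPathIn G Set.univ a b (2 ^ d - 2) := by
  refine IsDegreeLinked.hasLongPathIn hG hpar
    ⟨Set.finite_univ, linked_univ_of_twoConnected h hab, ?_, fun z _ hza hzb => ?_⟩
  · simpa using exists_ne_of_twoConnected h a b
  · simpa [degreeIn, neighborSet] using hdeg z hza hzb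

end TwoConnected

/-! ### The grid -/

section Subgraph

variable {V : Type*} {G : SimpleGraph V}

theorem HasMatchingCuts.coe_subgraph (hG : HasMatchingCuts G) (K : G.Subgraph) :
    HasMatchingCuts K.coe := by
  intro x y hxy
  obtain ⟨P, hx, hy, hP⟩ := hG x y (Subtype.coe_ne_coe.2 hxy)
  exact ⟨Subtype.val ⁻¹' P, hx, hy, fun u v v' hv hv' huv huv' =>
    Subtype.ext (hP u v v' hv hv' (K.adj_sub huv) (K.adj_sub huv'))⟩

theorem IsParity.coe_subgraph {par : V → ℕ} (hpar : IsParity G par) (K : G.Subgraph) :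
    IsParity K.coe fun v => par v where
  add_eq_one _ _ huv := hpar.add_eq_one _ _ (K.adj_sub huv)
  le_one v := hpar.le_one v

theorem ncard_coe_neighborSet (K : G.Subgraph) (z : K.verts) :
    (K.coe.neighborSet z).ncard = (K.neighborSet z).ncard := by
  rw [← Set.ncard_image_of_injective _ Subtype.val_injective]
  congr 1
  ext w
  exact ⟨fun ⟨_, hv, hvw⟩ => hvw ▸ hv, fun hw => ⟨⟨w, K.edge_vert (K.adj_symm hw)⟩, hw, rfl⟩⟩

end Subgraph

section Grid

variable {n : ℕ} {x y : Fin n → ℤ}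

theorem exists_coord_of_gridGraph_adj (h : (gridGraph n).Adj x y) :
    ∃ i, (x i - y i = 1 ∨ x i - y i = -1) ∧ ∀ j, j ≠ i → x j = y j := by
  obtain ⟨-, ⟨i, hi, hij⟩ | ⟨i, hi, hij⟩⟩ := h
  · exact ⟨i, (abs_eq zero_le_one).1 hi, hij⟩
  · exact ⟨i, (abs_eq zero_le_one).1 (abs_sub_comm (y i) (x i) ▸ hi), fun j hj => (hij j hj).symm⟩

theorem isMatchingCut_gridGraph_setOf_le (i : Fin n) (c : ℤ) :
    IsMatchingCut (gridGraph n) {v | v i ≤ c} := by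
  intro u v v' hv hv' huv huv'
  simp only [Set.mem_ofPred_eq, not_le] at hv hv'
  obtain ⟨k, hk, huv⟩ := exists_coord_of_gridGraph_adj huv
  obtain ⟨k', hk', huv'⟩ := exists_coord_of_gridGraph_adj huv'
  obtain rfl : i = k := by
    by_contra hik
    have := huv i hik
    omega
  obtain rfl : i = k' := by
    by_contra hik
    have := huv' i hik
    omega
  funext j
  rcases eq_or_ne j i with rfl | hj
  · omega
  · rw [← huv j hj, ← huv' j hj]

theorem hasMatchingCuts_gridGraph (n : ℕ) : HasMatchingCuts (gridGraph n) := by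
  intro x y hxy
  obtain ⟨i, hi⟩ := Function.ne_iff.1 hxy
  rcases lt_or_gt_of_ne hi with hlt | hlt
  · exact ⟨{v | v i ≤ x i}, le_refl (x i), hlt.not_ge, isMatchingCut_gridGraph_setOf_le i (x i)⟩
  · exact ⟨{v | v i ≤ y i}ᶜ, hlt.not_ge, not_not.2 (le_refl (y i)),
      (isMatchingCut_gridGraph_setOf_le i (y i)).compl⟩

/-- The parity of the coordinate sum, the bipartition of the grid. -/
def gridParity (z : Fin n → ℤ) : ℕ := ((∑ i, z i) % 2).toNat

theorem isParity_gridParity (n : ℕ) : IsParity (gridGraph n) gridParity where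
  add_eq_one x y hxy := by
    obtain ⟨i, hi, hxy⟩ := exists_coord_of_gridGraph_adj hxy
    have hsum : ∑ j, x j - ∑ j, y j = x i - y i := by
      rw [← Finset.sum_sub_distrib]
      exact Finset.sum_eq_single i (fun j _ hj => by rw [hxy j hj, sub_self]) (by simp)
    unfold gridParity
    omega
  le_one x := by
    unfold gridParity
    omega

theorem abs_sub_le_one_of_gridGraph_adj (h : (gridGraph n).Adj x y) (j : Fin n) :
    |y j - x j| ≤ 1 := by
  obtain ⟨i, hi, hij⟩ := exists_coord_of_gridGraph_adj h
  rcases eq_or_ne j i with rfl | hj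
  · exact abs_le.2 (by omega)
  · simp [hij j hj]

theorem abs_sub_le_length (p : (gridGraph n).Walk x y) (j : Fin n) : |y j - x j| ≤ p.length := by
  induction p with
  | nil => simp
  | @cons u v w huv p ih =>
    calc |w j - u j| ≤ |w j - v j| + |v j - u j| := abs_sub_le _ _ _
      _ ≤ p.length + 1 := add_le_add ih (abs_sub_le_one_of_gridGraph_adj huv j)
      _ = (Walk.cons huv p).length := by simp

theorem finite_setOf_forall_abs_sub_le (a : Fin n → ℤ) (r : ℤ) :
    {x : Fin n → ℤ | ∀ j, |x j - a j| ≤ r}.Finite :=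
  (Set.finite_Icc (fun j => a j - r) fun j => a j + r).subset fun x hx =>
    ⟨fun j => by have := abs_le.1 (hx j); grind, fun j => by have := abs_le.1 (hx j); grind⟩

variable {G : (gridGraph n).Subgraph} {a b : G.verts}

theorem hasLongPathIn_of_infinite (hG : G.verts.Infinite) (h : TwoConnected G.coe) (hab : a ≠ b)
    (m : ℕ) : HasLongPathIn G.coe Set.univ a b m := by
  obtain ⟨x, ⟨hxG, hxfar⟩, hxb⟩ :=
    ((hG.sdiff (finite_setOf_forall_abs_sub_le a.1 m)).sdiff (Set.finite_singleton b.1)).nonempty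
  obtain ⟨j, hj⟩ : ∃ j, (m : ℤ) < |x j - a.1 j| := by simpa using hxfar
  have hxa : x ≠ a.1 := by
    rintro rfl
    simp only [sub_self, abs_zero] at hj
    omega
  obtain ⟨l₁, l₂, ⟨p, -, -, hp⟩, path⟩ := exists_hasPathIn_through_of_twoConnected h hab
    (x := ⟨x, hxG⟩) (fun e => hxa (congrArg Subtype.val e))
    fun e => hxb (congrArg Subtype.val e : x = b.1)
  have hl₁ : (m : ℤ) < l₁ := by
    rw [← hp, ← Walk.length_map G.hom p]
    exact hj.trans_le (abs_sub_le_length (p.map G.hom) j)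
  exact ⟨l₁ + l₂, by omega, path⟩

end Grid

end GridPath

/-- Let `G` be a 2-connected subgraph of the grid `ℤ^n` with distinct vertices `a, b`
such that every vertex `z ∉ {a,b}` has degree at least `d` in `G`.  Then `G` contains
an `a-b` path of length at least `2^d - 2`. -/
theorem grid_twoConnected_path (n d : ℕ) (G : (gridGraph n).Subgraph)
    (h2 : TwoConnected G.coe)
    (a b : Fin n → ℤ) (ha : a ∈ G.verts) (hb : b ∈ G.verts) (hab : a ≠ b)
    (hdeg : ∀ z ∈ G.verts, z ≠ a → z ≠ b → d ≤ (G.neighborSet z).ncard) :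
    ∃ p : G.coe.Walk ⟨a, ha⟩ ⟨b, hb⟩, p.IsPath ∧ 2 ^ d - 2 ≤ p.length := by
  have hab' : (⟨a, ha⟩ : G.verts) ≠ ⟨b, hb⟩ := fun e => hab (congrArg Subtype.val e)
  obtain ⟨m, hm, p, hp, -, rfl⟩ :
      GridPath.HasLongPathIn G.coe Set.univ ⟨a, ha⟩ ⟨b, hb⟩ (2 ^ d - 2) := by
    rcases G.verts.finite_or_infinite with hfin | hinf
    · have : Finite G.verts := hfin
      refine GridPath.hasLongPathIn_univ_of_twoConnected h2
        ((GridPath.hasMatchingCuts_gridGraph n).coe_subgraph G)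
        ((GridPath.isParity_gridParity n).coe_subgraph G) hab' fun z hza hzb => ?_
      rw [GridPath.ncard_coe_neighborSet]
      exact hdeg z z.2 (fun e => hza (Subtype.ext e)) fun e => hzb (Subtype.ext e)
    · exact GridPath.hasLongPathIn_of_infinite hinf h2 hab' _
  exact ⟨p, hp, hm⟩
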